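/- arXiv:math/0606100 — 3 statements merged into one kernel-verified Lean document; each statement's English description precedes it below -/
import Mathlib

section
/- Let S₆ = x⁶ + y⁶ + z⁶ + t⁶ + 15·(x²y²z² + x²y²t² + x²z²t² + y²z²t²) and Q = x² + y² + z² + t². The sextic surface 8·S₆ − 5·Q³ = 0 in ℙ³ contains exactly 132 lines. -/
/-!
Identify `ℂ⁴` with the `2 × 2` matrices (equivalently, complex quaternions), so that `Q` becomes the
determinant. The group `SL₂ × SL₂` acts by left and right multiplication, and `8 S₆ - 5 Q³` turns out to be,
up to a factor, the sextic form attached to `f ⊗ f`, where `f = u⁵v - uv⁵` is the octahedral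
binary form, whose roots are the six vertices of a regular octahedron on the Riemann sphere (`eval_eq`).

A line corresponds to a pair `(p, q) ≠ 0` of vectors of `ℂ³` with `p · p = q · q`, up to a common scalar: it
is the space of quaternions `x` with `p x = x q`, where `p`, `q` are read as pure quaternions
(`exists_lineOf`, `finrank_lineOf`, `lineOf_eq`). There are three positions relative to the quadric `Q = 0`.

* Transverse lines, `p · p = q · q = 1` after scaling. If `a`, `b` are the eigenvectors of `p`, and `c`, `d`
  those of `q` acting from the right, the line is spanned by `a cᵀ` and `b dᵀ`, and the restriction of the
  sextic to it is `∑ C(6,k) g_k h_k s^k t^(6-k)` up to a factor, where `g` and `h` are the coefficients of `f` in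
  the bases `a, b` and `c, d` (`sextic_diag`). So the line lies on the surface iff `g_k h_k = 0` for all `k`.
  The octahedral form is characterised by the vanishing of its fourth transvectant with itself
  (`IsOct`), and these equations show that one of `g`, `h` is supported on `{1, 5}` and the other on `{0, 3, 6}` or
  `{0, 2, 4, 6}` (`supp_cases`). Geometrically, one of `p`, `q` spans an axis of the octahedron through
  vertices, and the other one through face centres or edge midpoints (`frame_supp`, `liesOn_unit`).
* Tangent lines, `p` and `q` both nonzero isotropic, never lie on the surface since `f` has simple
  roots (`not_liesOn_tangent`).
* Lines on the quadric, `p = 0` or `q = 0`. Those on the surface correspond to the six roots of `f`, in each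
  ruling (`liesOn_left`, `liesOn_right`).

There are `3` vertex axes and `8 + 12` unit vectors along face and edge axes. The sign left by the
normalisation is used up by the choice of a vector on the vertex axis, so the total is
`2 · 3 · (8 + 12) + 2 · 6 = 132`.
-/

open MvPolynomial

/-- A line in ℙ³: a 2-dimensional linear subspace of ℂ⁴. -/
def IsLine (W : Submodule ℂ (Fin 4 → ℂ)) : Prop :=
  Module.finrank ℂ W = 2

/-- The line `W` lies on the surface `F = 0`. -/
def LiesOn (F : MvPolynomial (Fin 4) ℂ) (W : Submodule ℂ (Fin 4 → ℂ)) : Prop :=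
  ∀ v ∈ W, eval v F = 0

/-- The `G₆`-invariant sextic
`S₆ = x⁶+y⁶+z⁶+t⁶+15(x²y²z²+x²y²t²+x²z²t²+y²z²t²)`. -/
noncomputable def S6 : MvPolynomial (Fin 4) ℂ :=
  X 0 ^ 6 + X 1 ^ 6 + X 2 ^ 6 + X 3 ^ 6 +
    15 * (X 0 ^ 2 * X 1 ^ 2 * X 2 ^ 2 + X 0 ^ 2 * X 1 ^ 2 * X 3 ^ 2 +
      X 0 ^ 2 * X 2 ^ 2 * X 3 ^ 2 + X 1 ^ 2 * X 2 ^ 2 * X 3 ^ 2)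

/-- The quadric `Q = x² + y² + z² + t²`. -/
noncomputable def Q2 : MvPolynomial (Fin 4) ℂ :=
  X 0 ^ 2 + X 1 ^ 2 + X 2 ^ 2 + X 3 ^ 2

/-! ### Octahedral binary sextics and their transvectants -/

/-- `g` satisfies the equations of a sextic binary form `∑ C(6,k) g k u^k v^(6-k)` of octahedral type:
`e1`–`e5` say that its fourth transvectant with itself vanishes, and `e6` normalises its sixth
transvectant with itself, which is the quadratic invariant. -/
structure IsOct (g : Fin 7 → ℂ) : Prop where
  e1 : g 0 * g 4 - 4 * g 1 * g 3 + 3 * g 2 ^ 2 = 0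
  e2 : g 0 * g 5 - 3 * g 1 * g 4 + 2 * g 2 * g 3 = 0
  e3 : g 0 * g 6 - 9 * g 2 * g 4 + 8 * g 3 ^ 2 = 0
  e4 : g 1 * g 6 - 3 * g 2 * g 5 + 2 * g 3 * g 4 = 0
  e5 : g 2 * g 6 - 4 * g 3 * g 5 + 3 * g 4 ^ 2 = 0
  e6 : g 0 * g 6 - 6 * g 1 * g 5 + 15 * g 2 * g 4 - 10 * g 3 ^ 2 = 6

/-- The coefficients are supported on `{1, 5}`: the shape of the octahedral form in coordinates where
two opposite vertices of the octahedron are `0` and `∞`. -/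
def SuppV (g : Fin 7 → ℂ) : Prop := g 0 = 0 ∧ g 2 = 0 ∧ g 3 = 0 ∧ g 4 = 0 ∧ g 6 = 0
/-- The coefficients are supported on `{0, 3, 6}`: the shape of the octahedral form in coordinates
where the centres of two opposite faces are `0` and `∞`. -/
def SuppF (g : Fin 7 → ℂ) : Prop := g 1 = 0 ∧ g 2 = 0 ∧ g 4 = 0 ∧ g 5 = 0
/-- The coefficients are supported on `{0, 2, 4, 6}`: the shape of the octahedral form in coordinates
where the midpoints of two opposite edges are `0` and `∞`. -/
def SuppE (g : Fin 7 → ℂ) : Prop := g 1 = 0 ∧ g 3 = 0 ∧ g 5 = 0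

theorem SuppV.ne {g : Fin 7 → ℂ} (hg : IsOct g) (h : SuppV g) : g 1 ≠ 0 ∧ g 5 ≠ 0 := by
  obtain ⟨h0, h2, h3, h4, h6⟩ := h
  have := hg.e6
  constructor <;> intro h <;> simp [*] at this

/-- An octahedral form has no double root: `g 0` and `g 1` are its value and (up to a factor) its
derivative at one of the two base points. -/
theorem IsOct.ne_zero_or_one {g : Fin 7 → ℂ} (hg : IsOct g) (h0 : g 0 = 0) : g 1 ≠ 0 := by
  intro h1
  have h2 : g 2 = 0 := by simpa [h0, h1] using hg.e1
  have h3 : g 3 = 0 := by simpa [h0, h1, h2] using hg.e3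
  have := hg.e6
  simp [*] at this

/-- The same as `IsOct.ne_zero_or_one`, at the other base point. -/
theorem IsOct.ne_six_or_five {g : Fin 7 → ℂ} (hg : IsOct g) (h0 : g 6 = 0) : g 5 ≠ 0 := by
  intro h1
  have h2 : g 4 = 0 := by simpa [h0, h1] using hg.e5
  have h3 : g 3 = 0 := by simpa [h0, h1, h2] using hg.e3
  have := hg.e6
  simp [*] at this

theorem IsOct.suppV {g : Fin 7 → ℂ} (hg : IsOct g) (h3 : g 3 = 0) (h : g 0 * g 6 = 0) :
    SuppV g := by
  have h1 := hg.ne_zero_or_one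
  have h5 := hg.ne_six_or_five
  have e1 := hg.e1
  have e2 := hg.e2
  have e4 := hg.e4
  have e5 := hg.e5
  rcases mul_eq_zero.1 h with h0 | h6
  · have h1 := h1 h0
    have h2 : g 2 = 0 := by simpa [h0, h3] using e1
    have h6 : g 6 = 0 := by simpa [h2, h3, h1] using e4
    have h4 : g 4 = 0 := by simpa [h6, h3] using e5
    exact ⟨h0, h2, h3, h4, h6⟩
  · have h5 := h5 h6
    have h4 : g 4 = 0 := by simpa [h6, h3] using e5
    have h0 : g 0 = 0 := by simpa [h4, h3, h5] using e2
    have h2 : g 2 = 0 := by simpa [h0, h3] using e1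
    exact ⟨h0, h2, h3, h4, h6⟩

/-- Half of `supp_cases`: the hypothesis `hyp` says that `g` does not itself have vertex shape. -/
theorem supp_half {g h : Fin 7 → ℂ} (hg : IsOct g) (hh : IsOct h) (H : ∀ k, g k * h k = 0)
    (hyp : g 3 ≠ 0 ∨ g 2 * g 4 ≠ 0) (h3 : h 3 = 0) : SuppV h ∧ (SuppF g ∨ SuppE g) := by
  have hV : SuppV h := by
    apply hh.suppV h3
    by_contra hc
    obtain ⟨c0, c6⟩ := mul_ne_zero_iff.1 hc
    have g0 : g 0 = 0 := (mul_eq_zero.1 (H 0)).resolve_right c0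
    have h24 : h 2 * h 4 ≠ 0 := by
      intro h24
      apply hc
      linear_combination hh.e3 + 9 * h24 - 8 * h 3 * h3
    obtain ⟨c2, c4⟩ := mul_ne_zero_iff.1 h24
    have g2 : g 2 = 0 := (mul_eq_zero.1 (H 2)).resolve_right c2
    have e3 := hg.e3
    have g3 : g 3 = 0 := by simpa [g0, g2] using e3
    simp [g3, g2] at hyp
  refine ⟨hV, ?_⟩
  obtain ⟨h1, h5⟩ := SuppV.ne hh hV
  have g1 : g 1 = 0 := (mul_eq_zero.1 (H 1)).resolve_right h1
  have g5 : g 5 = 0 := (mul_eq_zero.1 (H 5)).resolve_right h5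
  by_cases g3 : g 3 = 0
  · exact Or.inr ⟨g1, g3, g5⟩
  · have g2 : g 2 = 0 := by simpa [g1, g5, g3] using hg.e2
    have g4 : g 4 = 0 := by simpa [g1, g5, g3] using hg.e4
    exact Or.inl ⟨g1, g2, g4, g5⟩

/-- Two octahedral forms with `g k * h k = 0` for all `k` are, up to exchange, one of vertex shape and
one of face or edge shape. Everything follows from the transvectant equations `IsOct`. -/
theorem supp_cases {g h : Fin 7 → ℂ} (hg : IsOct g) (hh : IsOct h) (H : ∀ k, g k * h k = 0) :
    (SuppV g ∧ (SuppF h ∨ SuppE h)) ∨ (SuppV h ∧ (SuppF g ∨ SuppE g)) := by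
  have H' : ∀ k, h k * g k = 0 := fun k => by rw [mul_comm]; exact H k
  have key : ∀ {g : Fin 7 → ℂ}, IsOct g → g 3 = 0 → g 2 * g 4 = 0 → SuppV g := by
    intro g hg h3 h24
    apply hg.suppV h3
    linear_combination hg.e3 + 9 * h24 - 8 * g 3 * h3
  by_cases g3 : g 3 = 0
  · by_cases h3 : h 3 = 0
    · by_cases g24 : g 2 * g 4 = 0
      · by_cases h24 : h 2 * h 4 = 0
        · exact absurd (H 1) (mul_ne_zero (SuppV.ne hg (key hg g3 g24)).1
            (SuppV.ne hh (key hh h3 h24)).1)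
        · exact Or.inl (supp_half hh hg H' (Or.inr h24) g3)
      · exact Or.inr (supp_half hg hh H (Or.inr g24) h3)
    · exact Or.inl (supp_half hh hg H' (Or.inl h3) g3)
  · have h3 : h 3 = 0 := (mul_eq_zero.1 (H 3)).resolve_left g3
    exact Or.inr (supp_half hg hh H (Or.inl g3) h3)

theorem prod_zero {g h : Fin 7 → ℂ} (hg : SuppV g) (hh : SuppF h ∨ SuppE h) (k : Fin 7) :
    g k * h k = 0 := by
  obtain ⟨h0, h2, h3, h4, h6⟩ := hg
  rcases hh with ⟨a, b, c, d⟩ | ⟨a, b, c⟩ <;> fin_cases k <;> simp [*]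

/-- The coefficients of the octahedral form `f = u⁵v - uv⁵` in the basis `a = (a₀, a₁)`,
`b = (b₀, b₁)` of `ℂ²`, scaled by `6`: entry `k` is six times the polarisation of `f` at `a` (`k`
times) and `b` (`6 - k` times), so that `6 f(s a + t b) = ∑ C(6,k) (polar k) s^k t^(6-k)`. -/
def polar (a₀ a₁ b₀ b₁ : ℂ) : Fin 7 → ℂ := ![
  6 * (b₀ ^ 5 * b₁ - b₀ * b₁ ^ 5),
  a₁ * b₀ ^ 5 + 5 * a₀ * b₀ ^ 4 * b₁ - (a₀ * b₁ ^ 5 + 5 * a₁ * b₁ ^ 4 * b₀),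
  2 * a₀ * a₁ * b₀ ^ 4 + 4 * a₀ ^ 2 * b₀ ^ 3 * b₁
    - (2 * a₀ * a₁ * b₁ ^ 4 + 4 * a₁ ^ 2 * b₁ ^ 3 * b₀),
  3 * a₀ ^ 2 * a₁ * b₀ ^ 3 + 3 * a₀ ^ 3 * b₀ ^ 2 * b₁
    - (3 * a₁ ^ 2 * a₀ * b₁ ^ 3 + 3 * a₁ ^ 3 * b₁ ^ 2 * b₀),
  2 * b₀ * b₁ * a₀ ^ 4 + 4 * b₀ ^ 2 * a₀ ^ 3 * a₁
    - (2 * b₀ * b₁ * a₁ ^ 4 + 4 * b₁ ^ 2 * a₁ ^ 3 * a₀),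
  b₁ * a₀ ^ 5 + 5 * b₀ * a₀ ^ 4 * a₁ - (b₀ * a₁ ^ 5 + 5 * b₁ * a₁ ^ 4 * a₀),
  6 * (a₀ ^ 5 * a₁ - a₀ * a₁ ^ 5)]

/-- The transvectants of a binary form are unchanged by a change of basis of determinant one, so the
equations `IsOct` hold in every such basis because they hold in the standard one. -/
theorem polar_isOct {a₀ a₁ b₀ b₁ : ℂ} (h : a₀ * b₁ - a₁ * b₀ = 1) :
    IsOct (polar a₀ a₁ b₀ b₁) := by
  have h6 : (a₀ * b₁ - a₁ * b₀) ^ 6 = 1 := by rw [h, one_pow]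
  constructor <;> simp [polar]
  · ring
  · ring
  · ring
  · ring
  · ring
  · linear_combination 6 * h6

/-! ### The surface in matrix coordinates -/

/-- The sextic form on `2 × 2` matrices with rows `(α, β)` and `(γ, δ)` that corresponds to
`f ⊗ f ∈ S⁶ℂ² ⊗ S⁶ℂ² ⊆ S⁶(ℂ² ⊗ ℂ²)`, where `f = u⁵v - uv⁵`. On a matrix `a cᵀ` of rank one it takes
the value `6 f(a) f(c)`, see `sextic_pure`. -/
def sextic (α β γ δ : ℂ) : ℂ :=
  α ^ 5 * δ + 5 * α ^ 4 * β * γ - β ^ 5 * γ - 5 * β ^ 4 * α * δ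
    - γ ^ 5 * β - 5 * γ ^ 4 * α * δ + δ ^ 5 * α + 5 * δ ^ 4 * β * γ

/-- In the coordinates of the matrix `x₀ + i x₁, x₂ + i x₃; -x₂ + i x₃, x₀ - i x₁`, whose determinant is
`Q`, the equation of the surface is a multiple of `sextic`. -/
theorem eval_eq (x : Fin 4 → ℂ) : eval x (8 * S6 - 5 * Q2 ^ 3) =
    3 / 2 * sextic (x 0 + Complex.I * x 1) (x 2 + Complex.I * x 3) (-x 2 + Complex.I * x 3)
      (x 0 - Complex.I * x 1) := by
  have hI : Complex.I ^ 2 = -1 := Complex.I_sq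
  simp [sextic, S6, Q2]
  have h4 : Complex.I ^ 4 = 1 := by linear_combination (Complex.I^2 - 1) * hI
  have h6 : Complex.I ^ 6 = -1 := by linear_combination (Complex.I^4 - Complex.I^2 + 1) * hI
  ring_nf
  simp only [hI, h4, h6]
  ring

/-- Restriction of `sextic` to a line that meets the quadric `det = 0` in two distinct points
`a cᵀ` and `b dᵀ`. -/
theorem sextic_diag (a₀ a₁ b₀ b₁ c₀ c₁ d₀ d₁ s t : ℂ) :
    6 * sextic (s * (a₀ * c₀) + t * (b₀ * d₀)) (s * (a₀ * c₁) + t * (b₀ * d₁))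
      (s * (a₁ * c₀) + t * (b₁ * d₀)) (s * (a₁ * c₁) + t * (b₁ * d₁)) =
    ∑ k : Fin 7, (Nat.choose 6 k : ℂ) * (polar a₀ a₁ b₀ b₁ k * polar c₀ c₁ d₀ d₁ k) *
      s ^ (k : ℕ) * t ^ (6 - (k : ℕ)) := by
  simp [Fin.sum_univ_succ, polar, sextic, Nat.choose]
  ring

/-- Restriction of `sextic` to a line that touches the quadric `det = 0` at `a cᵀ`: the second point is
the tangent vector `a dᵀ + b cᵀ`. -/
theorem sextic_tangent (a₀ a₁ b₀ b₁ c₀ c₁ d₀ d₁ s : ℂ) {g h : Fin 7 → ℂ}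
    (hg : g = polar a₀ a₁ b₀ b₁) (hh : h = polar c₀ c₁ d₀ d₁) :
    6 * sextic (s * (a₀ * c₀) + (a₀ * d₀ + b₀ * c₀)) (s * (a₀ * c₁) + (a₀ * d₁ + b₀ * c₁))
      (s * (a₁ * c₀) + (a₁ * d₀ + b₁ * c₀)) (s * (a₁ * c₁) + (a₁ * d₁ + b₁ * c₁)) =
    (g 6 * h 6) * s ^ 6 + 6 * (g 6 * h 5 + g 5 * h 6) * s ^ 5
      + 15 * (g 6 * h 4 + 2 * g 5 * h 5 + g 4 * h 6) * s ^ 4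
      + 20 * (g 6 * h 3 + 3 * g 5 * h 4 + 3 * g 4 * h 5 + g 3 * h 6) * s ^ 3
      + 15 * (g 6 * h 2 + 4 * g 5 * h 3 + 6 * g 4 * h 4 + 4 * g 3 * h 5 + g 2 * h 6) * s ^ 2
      + 6 * (g 6 * h 1 + 5 * g 5 * h 2 + 10 * g 4 * h 3 + 10 * g 3 * h 4 + 5 * g 2 * h 5
        + g 1 * h 6) * s
      + (g 6 * h 0 + 6 * g 5 * h 1 + 15 * g 4 * h 2 + 20 * g 3 * h 3 + 15 * g 2 * h 4
        + 6 * g 1 * h 5 + g 0 * h 6) := by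
  subst hg hh
  simp [polar, sextic]
  ring

theorem coeff_zero {c : Fin 7 → ℂ} (h : ∀ s : ℂ, ∑ k : Fin 7, s ^ (k : ℕ) * c k = 0) : c = 0 :=
  Matrix.eq_zero_of_forall_index_sum_pow_mul_eq_zero (f := fun j : Fin 7 => ((j : ℕ) : ℂ))
    (fun i j hij => by simpa [Fin.ext_iff] using hij) (fun j => h _)

theorem diag_coeff {a₀ a₁ b₀ b₁ c₀ c₁ d₀ d₁ : ℂ}
    (H : ∀ s t : ℂ, sextic (s * (a₀ * c₀) + t * (b₀ * d₀)) (s * (a₀ * c₁) + t * (b₀ * d₁))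
      (s * (a₁ * c₀) + t * (b₁ * d₀)) (s * (a₁ * c₁) + t * (b₁ * d₁)) = 0) (k : Fin 7) :
    polar a₀ a₁ b₀ b₁ k * polar c₀ c₁ d₀ d₁ k = 0 := by
  have h := coeff_zero (c := fun k : Fin 7 => (Nat.choose 6 k : ℂ) *
      (polar a₀ a₁ b₀ b₁ k * polar c₀ c₁ d₀ d₁ k)) (fun s => by
    have := sextic_diag a₀ a₁ b₀ b₁ c₀ c₁ d₀ d₁ s 1
    rw [H s 1, mul_zero] at this
    rw [this]
    exact Finset.sum_congr rfl fun k _ => by rw [one_pow]; ring)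
  refine (mul_eq_zero.1 (congrFun h k)).resolve_left ?_
  exact_mod_cast (Nat.choose_pos (by omega)).ne'

/-- A line tangent to the quadric but not contained in it never lies on the surface: the coefficients of
`s⁶`, `s⁵`, `s⁴` force a double root of `f`. -/
theorem tangent_false {a₀ a₁ b₀ b₁ c₀ c₁ d₀ d₁ : ℂ} (hab : a₀ * b₁ - a₁ * b₀ = 1)
    (hcd : c₀ * d₁ - c₁ * d₀ = 1)
    (H : ∀ s : ℂ, sextic (s * (a₀ * c₀) + (a₀ * d₀ + b₀ * c₀)) (s * (a₀ * c₁) + (a₀ * d₁ + b₀ * c₁))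
      (s * (a₁ * c₀) + (a₁ * d₀ + b₁ * c₀)) (s * (a₁ * c₁) + (a₁ * d₁ + b₁ * c₁)) = 0) :
    False := by
  have hg := polar_isOct hab
  have hh := polar_isOct hcd
  have key := fun s => sextic_tangent a₀ a₁ b₀ b₁ c₀ c₁ d₀ d₁ s rfl rfl
  generalize polar a₀ a₁ b₀ b₁ = g at *
  generalize polar c₀ c₁ d₀ d₁ = h at *
  have hc := coeff_zero (c := ![
      (g 6 * h 0 + 6 * g 5 * h 1 + 15 * g 4 * h 2 + 20 * g 3 * h 3 + 15 * g 2 * h 4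
        + 6 * g 1 * h 5 + g 0 * h 6),
      6 * (g 6 * h 1 + 5 * g 5 * h 2 + 10 * g 4 * h 3 + 10 * g 3 * h 4 + 5 * g 2 * h 5
        + g 1 * h 6),
      15 * (g 6 * h 2 + 4 * g 5 * h 3 + 6 * g 4 * h 4 + 4 * g 3 * h 5 + g 2 * h 6),
      20 * (g 6 * h 3 + 3 * g 5 * h 4 + 3 * g 4 * h 5 + g 3 * h 6),
      15 * (g 6 * h 4 + 2 * g 5 * h 5 + g 4 * h 6),
      6 * (g 6 * h 5 + g 5 * h 6), g 6 * h 6]) (fun s => by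
    have := key s
    rw [H s, mul_zero] at this
    rw [this]
    simp [Fin.sum_univ_succ]
    ring)
  have h6 : g 6 * h 6 = 0 := congrFun hc 6
  have h5 : 6 * (g 6 * h 5 + g 5 * h 6) = 0 := congrFun hc 5
  have h4 : 15 * (g 6 * h 4 + 2 * g 5 * h 5 + g 4 * h 6) = 0 := congrFun hc 4
  have g5 := hg.ne_six_or_five
  have k5 := hh.ne_six_or_five
  rcases mul_eq_zero.1 h6 with z | z
  · have z' : h 6 = 0 := by simpa [z, g5 z] using h5
    simp [z, z', g5 z, k5 z'] at h4
  · have z' : g 6 = 0 := by simpa [z, k5 z] using h5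
    simp [z, z', g5 z', k5 z] at h4

/-! ### Unit vectors, eigenbases and symmetry axes of the octahedron -/

/-- A unit vector `p ∈ ℂ³`, viewed as a traceless `2 × 2` matrix with eigenvalues `±i`, has eigenvectors
`a` and `b` that can be scaled to determinant one; the matrix, hence `p`, is recovered from them. -/
theorem exists_frame {p₁ p₂ p₃ : ℂ} (hp : p₁ ^ 2 + p₂ ^ 2 + p₃ ^ 2 = 1) :
    ∃ a₀ a₁ b₀ b₁ : ℂ, a₀ * b₁ - a₁ * b₀ = 1 ∧ p₁ = a₀ * b₁ + a₁ * b₀ ∧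
      p₂ = -Complex.I * (a₁ * b₁ + a₀ * b₀) ∧ p₃ = a₁ * b₁ - a₀ * b₀ := by
  have hI : Complex.I ^ 2 = -1 := Complex.I_sq
  set u := (-p₃ + Complex.I * p₂) / 2 with hu
  set v := (p₃ + Complex.I * p₂) / 2 with hv
  -- `-2i u` and `2i v` are the off-diagonal entries of the matrix; the aim is `u = a₀ b₀`
  -- and `v = a₁ b₁`, while `a₀ b₁` and `a₁ b₀` are `(p₁ ± 1) / 2`.
  have huv : 4 * (u * v) = p₁ ^ 2 - 1 := by
    rw [hu, hv]; linear_combination p₂ ^ 2 * hI - hp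
  have h2 : p₂ = -Complex.I * (v + u) := by
    rw [hu, hv]; linear_combination p₂ * hI
  have h3 : p₃ = v - u := by rw [hu, hv]; ring
  clear_value u v
  subst h2 h3
  clear hu hv hp
  by_cases h : p₁ + 1 = 0
  · obtain rfl : p₁ = -1 := by linear_combination h
    have huv : u * v = 0 := by linear_combination huv / 4
    rcases mul_eq_zero.1 huv with rfl | rfl
    · exact ⟨0, 1, -1, v, by ring, by ring, by ring, by ring⟩
    · exact ⟨-u, 1, -1, 0, by ring, by ring, by ring, by ring⟩
  · have e : 2 * v / (p₁ + 1) * ((p₁ + 1) / 2) = v := by field_simp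
    have e' : 2 * v / (p₁ + 1) * u = (p₁ - 1) / 2 := by
      field_simp
      linear_combination huv
    refine ⟨1, 2 * v / (p₁ + 1), u, (p₁ + 1) / 2, ?_, ?_, ?_, ?_⟩
    · linear_combination -e'
    · linear_combination -e'
    · linear_combination Complex.I * e
    · linear_combination -e

/-- A nonzero isotropic vector `p ∈ ℂ³`, viewed as a nilpotent `2 × 2` matrix, is determined by a suitably
scaled vector `a` of its kernel, which is completed to a basis `a`, `b` of determinant one. -/
theorem exists_null {p₁ p₂ p₃ : ℂ} (hp : p₁ ^ 2 + p₂ ^ 2 + p₃ ^ 2 = 0)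
    (h0 : ¬ (p₁ = 0 ∧ p₂ = 0 ∧ p₃ = 0)) :
    ∃ a₀ a₁ b₀ b₁ : ℂ, a₀ * b₁ - a₁ * b₀ = 1 ∧ p₁ = 2 * a₀ * a₁ ∧
      p₂ = -Complex.I * (a₁ ^ 2 + a₀ ^ 2) ∧ p₃ = a₁ ^ 2 - a₀ ^ 2 := by
  have hI : Complex.I ^ 2 = -1 := Complex.I_sq
  obtain ⟨a, ha⟩ := IsAlgClosed.exists_pow_nat_eq ((-p₃ + Complex.I * p₂) / 2) (n := 2) (by norm_num)
  obtain ⟨b, hb⟩ := IsAlgClosed.exists_pow_nat_eq ((p₃ + Complex.I * p₂) / 2) (n := 2) (by norm_num)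
  have h2 : p₂ = -Complex.I * (b ^ 2 + a ^ 2) := by
    rw [ha, hb]; linear_combination p₂ * hI
  have h3 : p₃ = b ^ 2 - a ^ 2 := by rw [ha, hb]; ring
  clear ha hb
  subst h2 h3
  have : (p₁ - 2 * a * b) * (p₁ - 2 * a * -b) = 0 := by
    linear_combination hp - (b ^ 2 + a ^ 2) ^ 2 * hI
  have key : ∃ b', b' ^ 2 = b ^ 2 ∧ p₁ = 2 * a * b' := by
    rcases mul_eq_zero.1 this with h | h
    · exact ⟨b, rfl, by linear_combination h⟩
    · exact ⟨-b, by ring, by linear_combination h⟩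
  obtain ⟨c, hc, h1⟩ := key
  rw [← hc] at h0 ⊢
  clear hc this hp
  subst h1
  by_cases ha : a = 0
  · have hc : c ≠ 0 := by
      rintro rfl
      simp [ha] at h0
    exact ⟨a, c, -c⁻¹, 0, by field_simp; ring, rfl, rfl, rfl⟩
  · exact ⟨a, c, 0, a⁻¹, by field_simp; ring, rfl, rfl, rfl⟩

/-- For a unit vector: the axis spanned by it joins two opposite vertices of the octahedron
with vertices `±eᵢ`. -/
def AxV (p₁ p₂ p₃ : ℂ) : Prop := p₁ * p₂ = 0 ∧ p₁ * p₃ = 0 ∧ p₂ * p₃ = 0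
/-- For a unit vector: its axis joins the centres of two opposite faces of the octahedron. -/
def AxF (p₁ p₂ p₃ : ℂ) : Prop := p₁ ^ 2 = 1 / 3 ∧ p₂ ^ 2 = 1 / 3 ∧ p₃ ^ 2 = 1 / 3
/-- For a unit vector: its axis joins the midpoints of two opposite edges of the octahedron. -/
def AxE (p₁ p₂ p₃ : ℂ) : Prop := (p₁ = 0 ∧ p₂ ^ 2 = 1 / 2 ∧ p₃ ^ 2 = 1 / 2) ∨
  (p₂ = 0 ∧ p₃ ^ 2 = 1 / 2 ∧ p₁ ^ 2 = 1 / 2) ∨ (p₃ = 0 ∧ p₁ ^ 2 = 1 / 2 ∧ p₂ ^ 2 = 1 / 2)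

/-- The shape of the octahedral form in the eigenbasis `a`, `b` of a unit vector `p` says which kind of
symmetry axis of the octahedron `p` spans. The link is that `g 3` and the products `g k * g (6 - k)` do not
change when `a`, `b` are rescaled to `c a`, `c⁻¹ b`, so they are polynomials in `p`. -/
theorem frame_supp {a₀ a₁ b₀ b₁ p₁ p₂ p₃ : ℂ} (h : a₀ * b₁ - a₁ * b₀ = 1)
    (h1 : p₁ = a₀ * b₁ + a₁ * b₀)
    (h2 : p₂ = -Complex.I * (a₁ * b₁ + a₀ * b₀)) (h3 : p₃ = a₁ * b₁ - a₀ * b₀) :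
    (SuppV (polar a₀ a₁ b₀ b₁) ↔ AxV p₁ p₂ p₃) ∧
    (SuppF (polar a₀ a₁ b₀ b₁) ↔ AxF p₁ p₂ p₃) ∧
    (SuppE (polar a₀ a₁ b₀ b₁) ↔ AxE p₁ p₂ p₃) := by
  have hI : Complex.I ^ 2 = -1 := Complex.I_sq
  have hg := polar_isOct h
  have hn : p₁ ^ 2 + p₂ ^ 2 + p₃ ^ 2 = 1 := by
    rw [h1, h2, h3]
    linear_combination (a₁ * b₁ + a₀ * b₀) ^ 2 * hI + (a₀ * b₁ - a₁ * b₀ + 1) * h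
  have h22 : p₂ ^ 2 = -(a₁ * b₁ + a₀ * b₀) ^ 2 := by
    rw [h2]; linear_combination (a₁ * b₁ + a₀ * b₀) ^ 2 * hI
  have g3 : polar a₀ a₁ b₀ b₁ 3 = -3 * Complex.I * (p₁ * p₂ * p₃) := by
    rw [h1, h2, h3]; simp [polar]
    linear_combination (-3) * (a₀ * b₁ + a₁ * b₀) * (a₁ * b₁ + a₀ * b₀) * (a₁ * b₁ - a₀ * b₀) * hI
  have g06 : polar a₀ a₁ b₀ b₁ 0 * polar a₀ a₁ b₀ b₁ 6 =
      9 * ((p₁ ^ 2 + p₂ ^ 2) * (p₁ ^ 2 + p₃ ^ 2) * (p₂ ^ 2 + p₃ ^ 2)) := by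
    rw [h22, h1, h3]; simp [polar]; ring
  have g33 : polar a₀ a₁ b₀ b₁ 3 ^ 2 = -9 * (p₁ * p₂ * p₃) ^ 2 := by
    rw [g3]; linear_combination 9 * (p₁ * p₂ * p₃) ^ 2 * hI
  clear h1 h2 h3 h22
  generalize polar a₀ a₁ b₀ b₁ = g at *
  have g24 : g 2 * g 4 = (p₁ ^ 2 + p₂ ^ 2) * (p₁ ^ 2 + p₃ ^ 2) * (p₂ ^ 2 + p₃ ^ 2)
      - 8 * (p₁ * p₂ * p₃) ^ 2 := by
    linear_combination (-hg.e3 + g06 + 8 * g33) / 9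
  have g15 : g 1 * g 5 = 4 * ((p₁ ^ 2 + p₂ ^ 2) * (p₁ ^ 2 + p₃ ^ 2) * (p₂ ^ 2 + p₃ ^ 2))
      - 5 * (p₁ * p₂ * p₃) ^ 2 - 1 := by
    linear_combination (-hg.e6 + g06 + 15 * g24 - 10 * g33) / 6
  have hI0 : Complex.I ≠ 0 := Complex.I_ne_zero
  have g30 : g 3 = 0 ↔ p₁ * p₂ * p₃ = 0 := by
    rw [g3]; simp
  obtain ⟨e1, e2, e3, e4, e5, e6⟩ := hg
  refine ⟨⟨?_, ?_⟩, ⟨?_, ?_⟩, ⟨?_, ?_⟩⟩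
  · rintro ⟨k0, k2, k3, k4, k6⟩
    rw [g30] at k3
    rw [k0] at g06
    unfold AxV
    grind
  · rintro ⟨k1, k2, k3⟩
    apply IsOct.suppV ⟨e1, e2, e3, e4, e5, e6⟩
    · rw [g30]; grind
    · grind
  · rintro ⟨k1, k2, k3, k4⟩
    rw [k2, zero_mul] at g24
    rw [k1, zero_mul] at g15
    have c2 : p₁ ^ 2 * p₂ ^ 2 + p₁ ^ 2 * p₃ ^ 2 + p₂ ^ 2 * p₃ ^ 2 = 1 / 3 := by grind
    have c3 : p₁ ^ 2 * p₂ ^ 2 * p₃ ^ 2 = 1 / 27 := by grind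
    -- The squares `pᵢ²` are the roots of `(X - 1/3)³`, by their elementary symmetric functions.
    have key : ∀ x, (x - p₁ ^ 2) * (x - p₂ ^ 2) * (x - p₃ ^ 2) = 0 → x = 1 / 3 := by
      intro x hx
      have : (x - 1 / 3) ^ 3 = 0 := by
        linear_combination hx + x ^ 2 * hn - x * c2 + c3
      exact sub_eq_zero.1 (pow_eq_zero_iff (by norm_num) |>.1 this)
    exact ⟨key _ (by ring), key _ (by ring), key _ (by ring)⟩
  · rintro ⟨k1, k2, k3⟩
    have h24 : g 2 * g 4 = 0 := by grind
    have h15 : g 1 * g 5 = 0 := by grind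
    have h06 : g 0 * g 6 ≠ 0 := by grind
    have h3 : g 3 ≠ 0 := by grind
    obtain ⟨h0, h6⟩ := mul_ne_zero_iff.1 h06
    rcases mul_eq_zero.1 h15 with h1 | h5
    · have h2 : g 2 = 0 := (pow_eq_zero_iff (n := 3) (by norm_num)).1 (by
        linear_combination (g 2 * e1 - g 0 * h24 + 4 * g 2 * g 3 * h1) / 3)
      have h4 : g 4 = 0 := by simpa [h1, h2, h0] using e1
      have h5 : g 5 = 0 := by simpa [h2, h4, h3] using e5
      exact ⟨h1, h2, h4, h5⟩
    · have h4 : g 4 = 0 := (pow_eq_zero_iff (n := 3) (by norm_num)).1 (by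
        linear_combination (g 4 * e5 - g 6 * h24 + 4 * g 4 * g 3 * h5) / 3)
      have h2 : g 2 = 0 := by simpa [h5, h4, h6] using e5
      have h1 : g 1 = 0 := by simpa [h2, h4, h3] using e1
      exact ⟨h1, h2, h4, h5⟩
  · rintro ⟨k1, k2, k3⟩
    rw [g30] at k2
    rw [k1, zero_mul] at g15
    have key : ∀ x y : ℂ, x + y = 1 → 4 * (x * y) = 1 → x = 1 / 2 ∧ y = 1 / 2 := by
      intro x y h1 h2
      obtain rfl : y = 1 - x := by linear_combination h1
      have : (x - 1 / 2) ^ 2 = 0 := by linear_combination -h2 / 4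
      have := sub_eq_zero.1 (pow_eq_zero_iff (by norm_num) |>.1 this)
      subst this
      norm_num
    rcases mul_eq_zero.1 k2 with k2 | rfl
    · rcases mul_eq_zero.1 k2 with rfl | rfl
      · exact Or.inl ⟨rfl, key _ _ (by linear_combination hn) (by grind)⟩
      · exact Or.inr (Or.inl ⟨rfl, key _ _ (by linear_combination hn) (by grind)⟩)
    · exact Or.inr (Or.inr ⟨rfl, key _ _ (by linear_combination hn) (by grind)⟩)
  · intro k
    have k3 : p₁ * p₂ * p₃ = 0 := by unfold AxE at k; grind
    have h15 : g 1 * g 5 = 0 := by unfold AxE at k; grind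
    have h24 : g 2 * g 4 ≠ 0 := by unfold AxE at k; grind
    rw [← g30] at k3
    obtain ⟨h2, h4⟩ := mul_ne_zero_iff.1 h24
    unfold SuppE
    grind

/-! ### Lines as pairs of pure quaternions -/

/-- The subspace of quaternions `x = x₀ + x₁ i + x₂ j + x₃ k` (with complex coefficients) such that
`p x = x q`, where `p` and `q` are pure quaternions. The four equations are the real part and the three
imaginary parts. If `p · p = q · q` and `(p, q) ≠ 0`, this is a line whose Plücker coordinates have
self-dual and anti-self-dual parts `p` and `q`. -/
def lineOf (p q : Fin 3 → ℂ) : Submodule ℂ (Fin 4 → ℂ) where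
  carrier := {x | (p 0 - q 0) * x 1 + (p 1 - q 1) * x 2 + (p 2 - q 2) * x 3 = 0 ∧
    (p 0 - q 0) * x 0 + (p 1 + q 1) * x 3 - (p 2 + q 2) * x 2 = 0 ∧
    (p 1 - q 1) * x 0 + (p 2 + q 2) * x 1 - (p 0 + q 0) * x 3 = 0 ∧
    (p 2 - q 2) * x 0 + (p 0 + q 0) * x 2 - (p 1 + q 1) * x 1 = 0}
  add_mem' := by
    rintro x y ⟨h0, h1, h2, h3⟩ ⟨k0, k1, k2, k3⟩
    simp only [Set.mem_ofPred_eq, Pi.add_apply]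
    exact ⟨by linear_combination h0 + k0, by linear_combination h1 + k1,
      by linear_combination h2 + k2, by linear_combination h3 + k3⟩
  zero_mem' := by simp
  smul_mem' := by
    rintro c x ⟨h0, h1, h2, h3⟩
    simp only [Set.mem_ofPred_eq, Pi.smul_apply, smul_eq_mul]
    exact ⟨by linear_combination c * h0, by linear_combination c * h1,
      by linear_combination c * h2, by linear_combination c * h3⟩

theorem mem_lineOf {p q : Fin 3 → ℂ} {x : Fin 4 → ℂ} : x ∈ lineOf p q ↔
    (p 0 - q 0) * x 1 + (p 1 - q 1) * x 2 + (p 2 - q 2) * x 3 = 0 ∧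
    (p 0 - q 0) * x 0 + (p 1 + q 1) * x 3 - (p 2 + q 2) * x 2 = 0 ∧
    (p 1 - q 1) * x 0 + (p 2 + q 2) * x 1 - (p 0 + q 0) * x 3 = 0 ∧
    (p 2 - q 2) * x 0 + (p 0 + q 0) * x 2 - (p 1 + q 1) * x 1 = 0 := Iff.rfl

theorem lineOf_smul {c : ℂ} (hc : c ≠ 0) (p q : Fin 3 → ℂ) :
    lineOf (c • p) (c • q) = lineOf p q := by
  ext x
  simp only [mem_lineOf, Pi.smul_apply, smul_eq_mul]
  have (y z : ℂ) (h : y = c * z) : y = 0 ↔ z = 0 := by rw [h]; simp [hc]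
  refine and_congr (this _ _ (by ring)) (and_congr (this _ _ (by ring))
    (and_congr (this _ _ (by ring)) (this _ _ (by ring))))

/-- The complex bilinear square `p · p`, so that `p² = -dot p` for a pure quaternion `p`. -/
def dot (p : Fin 3 → ℂ) : ℂ := p 0 ^ 2 + p 1 ^ 2 + p 2 ^ 2

theorem finrank_of_basis (W : Submodule ℂ (Fin 4 → ℂ)) (i j : Fin 4) (v w : Fin 4 → ℂ)
    (hv : v ∈ W) (hw : w ∈ W) (hvi : v i = 1) (hvj : v j = 0) (hwi : w i = 0) (hwj : w j = 1)
    (h : ∀ x ∈ W, ∀ k, x k = x i * v k + x j * w k) : Module.finrank ℂ W = 2 := by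
  have hW : W = Submodule.span ℂ (Set.range ![v, w]) := by
    apply le_antisymm
    · intro x hx
      have : x = x i • v + x j • w := funext (h x hx)
      rw [this]
      exact add_mem (Submodule.smul_mem _ _ (Submodule.subset_span ⟨0, rfl⟩))
        (Submodule.smul_mem _ _ (Submodule.subset_span ⟨1, rfl⟩))
    · rw [Submodule.span_le]
      rintro _ ⟨k, rfl⟩
      fin_cases k
      · exact hv
      · exact hw
  have hli : LinearIndependent ℂ ![v, w] := by
    rw [LinearIndependent.pair_iff]
    intro s t hst
    exact ⟨by simpa [hvi, hwi] using congrFun hst i, by simpa [hvj, hwj] using congrFun hst j⟩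
  rw [hW, finrank_span_eq_card hli]
  simp

theorem finrank_lineOf {p q : Fin 3 → ℂ} (h : dot p = dot q) (h0 : ¬ (p = 0 ∧ q = 0)) :
    Module.finrank ℂ (lineOf p q) = 2 := by
  unfold dot at h
  have hrs : (p 0 - q 0) * (p 0 + q 0) + (p 1 - q 1) * (p 1 + q 1)
      + (p 2 - q 2) * (p 2 + q 2) = 0 := by linear_combination h
  -- In terms of `r = p - q` and `s = p + q` the line is given by `r · v = 0` and `x₀ r + s × v = 0`,
  -- with `r · s = 0`; each coordinate of `r` or `s`, when nonzero, gives two free coordinates of `x`.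
  obtain ⟨r0, hr0⟩ : ∃ r, r = p 0 - q 0 := ⟨_, rfl⟩
  obtain ⟨r1, hr1⟩ : ∃ r, r = p 1 - q 1 := ⟨_, rfl⟩
  obtain ⟨r2, hr2⟩ : ∃ r, r = p 2 - q 2 := ⟨_, rfl⟩
  obtain ⟨s0, hs0⟩ : ∃ r, r = p 0 + q 0 := ⟨_, rfl⟩
  obtain ⟨s1, hs1⟩ : ∃ r, r = p 1 + q 1 := ⟨_, rfl⟩
  obtain ⟨s2, hs2⟩ : ∃ r, r = p 2 + q 2 := ⟨_, rfl⟩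
  have hne : r0 ≠ 0 ∨ r1 ≠ 0 ∨ r2 ≠ 0 ∨ s0 ≠ 0 ∨ s1 ≠ 0 ∨ s2 ≠ 0 := by
    by_contra! hc
    obtain ⟨c0, c1, c2, d0, d1, d2⟩ := hc
    apply h0
    constructor <;> funext k <;> fin_cases k <;> simp <;> grind
  have hmem : ∀ x, x ∈ lineOf p q ↔ r0 * x 1 + r1 * x 2 + r2 * x 3 = 0 ∧
    r0 * x 0 + s1 * x 3 - s2 * x 2 = 0 ∧ r1 * x 0 + s2 * x 1 - s0 * x 3 = 0 ∧
    r2 * x 0 + s0 * x 2 - s1 * x 1 = 0 := by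
    intro x; rw [mem_lineOf, hr0, hr1, hr2, hs0, hs1, hs2]
  rw [← hr0, ← hr1, ← hr2, ← hs0, ← hs1, ← hs2] at hrs
  generalize lineOf p q = W at *
  clear hr0 hr1 hr2 hs0 hs1 hs2 h0 h
  rcases hne with h | h | h | h | h | h
  · refine finrank_of_basis W 2 3 ![s2 / r0, -r1 / r0, 1, 0] ![-s1 / r0, -r2 / r0, 0, 1]
      ?_ ?_ rfl rfl rfl rfl ?_
    · rw [hmem]; simp; field_simp; grind
    · rw [hmem]; simp; field_simp; grind
    · intro x hx k
      rw [hmem] at hx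
      fin_cases k <;> simp <;> field_simp <;> grind
  · refine finrank_of_basis W 1 3 ![-s2 / r1, 1, -r0 / r1, 0] ![s0 / r1, 0, -r2 / r1, 1]
      ?_ ?_ rfl rfl rfl rfl ?_
    · rw [hmem]; simp; field_simp; grind
    · rw [hmem]; simp; field_simp; grind
    · intro x hx k
      rw [hmem] at hx
      fin_cases k <;> simp <;> field_simp <;> grind
  · refine finrank_of_basis W 1 2 ![s1 / r2, 1, 0, -r0 / r2] ![-s0 / r2, 0, 1, -r1 / r2]
      ?_ ?_ rfl rfl rfl rfl ?_
    · rw [hmem]; simp; field_simp; grind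
    · rw [hmem]; simp; field_simp; grind
    · intro x hx k
      rw [hmem] at hx
      fin_cases k <;> simp <;> field_simp <;> grind
  · refine finrank_of_basis W 0 1 ![1, 0, -r2 / s0, r1 / s0] ![0, 1, s1 / s0, s2 / s0]
      ?_ ?_ rfl rfl rfl rfl ?_
    · rw [hmem]; simp; field_simp; grind
    · rw [hmem]; simp; field_simp; grind
    · intro x hx k
      rw [hmem] at hx
      fin_cases k <;> simp <;> field_simp <;> grind
  · refine finrank_of_basis W 0 2 ![1, r2 / s1, 0, -r0 / s1] ![0, s0 / s1, 1, s2 / s1]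
      ?_ ?_ rfl rfl rfl rfl ?_
    · rw [hmem]; simp; field_simp; grind
    · rw [hmem]; simp; field_simp; grind
    · intro x hx k
      rw [hmem] at hx
      fin_cases k <;> simp <;> field_simp <;> grind
  · refine finrank_of_basis W 0 3 ![1, -r1 / s2, r0 / s2, 0] ![0, s0 / s2, s1 / s2, 1]
      ?_ ?_ rfl rfl rfl rfl ?_
    · rw [hmem]; simp; field_simp; grind
    · rw [hmem]; simp; field_simp; grind
    · intro x hx k
      rw [hmem] at hx
      fin_cases k <;> simp <;> field_simp <;> grind

/-! ### Which lines lie on the surface -/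

/-- The vector of `ℂ⁴` that corresponds to the matrix with rows `(α, β)` and `(γ, δ)` under
`x₀ + i x₁, x₂ + i x₃; -x₂ + i x₃, x₀ - i x₁`. -/
noncomputable def vecOf (α β γ δ : ℂ) : Fin 4 → ℂ :=
  ![(α + δ) / 2, -Complex.I * (α - δ) / 2, (β - γ) / 2, -Complex.I * (β + γ) / 2]

/-- The form `sextic` in the coordinates of `ℂ⁴`. -/
noncomputable def sexticAt (x : Fin 4 → ℂ) : ℂ :=
  sextic (x 0 + Complex.I * x 1) (x 2 + Complex.I * x 3) (-x 2 + Complex.I * x 3)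
      (x 0 - Complex.I * x 1)

theorem liesOn_iff {W : Submodule ℂ (Fin 4 → ℂ)} :
    LiesOn (8 * S6 - 5 * Q2 ^ 3) W ↔ ∀ x ∈ W, sexticAt x = 0 := by
  simp only [LiesOn, eval_eq, sexticAt]
  simp

theorem sexticAt_vecOf (α β γ δ : ℂ) : sexticAt (vecOf α β γ δ) = sextic α β γ δ := by
  have hI : Complex.I ^ 2 = -1 := Complex.I_sq
  unfold sexticAt
  congr 1 <;> simp [vecOf] <;> grind

/-- `p` as a `2 × 2` matrix has `a` and `b` as eigenvectors for `i` and `-i`, when `a`, `b` have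
determinant one. With `b = a` this is instead the nilpotent matrix with kernel and image spanned by
`a`. -/
structure Frame (p : Fin 3 → ℂ) (a₀ a₁ b₀ b₁ : ℂ) : Prop where
  h0 : p 0 = a₀ * b₁ + a₁ * b₀
  h1 : p 1 = -Complex.I * (a₁ * b₁ + a₀ * b₀)
  h2 : p 2 = a₁ * b₁ - a₀ * b₀

/-- The analogue of `Frame` for the transposed matrix; transposition changes the sign of `p 1`. This is
the one relevant to multiplication by `p` from the right. -/
structure Frame' (p : Fin 3 → ℂ) (a₀ a₁ b₀ b₁ : ℂ) : Prop where
  h0 : p 0 = a₀ * b₁ + a₁ * b₀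
  h1 : p 1 = Complex.I * (a₁ * b₁ + a₀ * b₀)
  h2 : p 2 = a₁ * b₁ - a₀ * b₀

/-- `p x = x q` holds for `x = a cᵀ` and `x = b dᵀ`, as the eigenvalues on both sides agree. -/
theorem diag_mem {p q : Fin 3 → ℂ} {a₀ a₁ b₀ b₁ c₀ c₁ d₀ d₁ : ℂ} (hp : Frame p a₀ a₁ b₀ b₁)
    (hq : Frame' q c₀ c₁ d₀ d₁) (h : a₀ * b₁ - a₁ * b₀ = 1) (k : c₀ * d₁ - c₁ * d₀ = 1)
    (s t : ℂ) :
    vecOf (s * (a₀ * c₀) + t * (b₀ * d₀)) (s * (a₀ * c₁) + t * (b₀ * d₁))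
      (s * (a₁ * c₀) + t * (b₁ * d₀)) (s * (a₁ * c₁) + t * (b₁ * d₁)) ∈ lineOf p q := by
  have hI : Complex.I ^ 2 = -1 := Complex.I_sq
  obtain ⟨h0, h1, h2⟩ := hp
  obtain ⟨k0, k1, k2⟩ := hq
  rw [mem_lineOf, h0, h1, h2, k0, k1, k2]
  simp [vecOf]
  refine ⟨?_, ?_, ?_, ?_⟩ <;> grind

/-- Conversely, every solution of `p x = x q` is a combination of `a cᵀ` and `b dᵀ`: its components along
`a dᵀ` and `b cᵀ` vanish, because the eigenvalues on the two sides differ. -/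
theorem diag_of_mem {p q : Fin 3 → ℂ} {a₀ a₁ b₀ b₁ c₀ c₁ d₀ d₁ : ℂ} (hp : Frame p a₀ a₁ b₀ b₁)
    (hq : Frame' q c₀ c₁ d₀ d₁) (h : a₀ * b₁ - a₁ * b₀ = 1) (k : c₀ * d₁ - c₁ * d₀ = 1)
    {x : Fin 4 → ℂ} (hx : x ∈ lineOf p q) :
    ∃ s t, x = vecOf (s * (a₀ * c₀) + t * (b₀ * d₀)) (s * (a₀ * c₁) + t * (b₀ * d₁))
      (s * (a₁ * c₀) + t * (b₁ * d₀)) (s * (a₁ * c₁) + t * (b₁ * d₁)) := by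
  have hI : Complex.I ^ 2 = -1 := Complex.I_sq
  obtain ⟨h0, h1, h2⟩ := hp
  obtain ⟨k0, k1, k2⟩ := hq
  rw [mem_lineOf, h0, h1, h2, k0, k1, k2] at hx
  obtain ⟨e0, e1, e2, e3⟩ := hx
  obtain ⟨α, hα⟩ : ∃ α, α = x 0 + Complex.I * x 1 := ⟨_, rfl⟩
  obtain ⟨δ, hδ⟩ : ∃ α, α = x 0 - Complex.I * x 1 := ⟨_, rfl⟩
  obtain ⟨β, hβ⟩ : ∃ α, α = x 2 + Complex.I * x 3 := ⟨_, rfl⟩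
  obtain ⟨γ, hγ⟩ : ∃ α, α = -x 2 + Complex.I * x 3 := ⟨_, rfl⟩
  have x0 : x 0 = (α + δ) / 2 := by grind
  have x1 : x 1 = -Complex.I * (α - δ) / 2 := by grind
  have x2 : x 2 = (β - γ) / 2 := by grind
  have x3 : x 3 = -Complex.I * (β + γ) / 2 := by grind
  simp only [x0, x1, x2, x3] at e0 e1 e2 e3
  clear hα hβ hγ hδ
  have f00 : a₀ * b₁ * α + a₁ * b₀ * α - 2 * a₀ * b₀ * γ
    - (α * (c₀ * d₁ + c₁ * d₀) - 2 * β * c₀ * d₀) = 0 := by grind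
  have f01 : a₀ * b₁ * β + a₁ * b₀ * β - 2 * a₀ * b₀ * δ
    - (2 * α * c₁ * d₁ - β * (c₀ * d₁ + c₁ * d₀)) = 0 := by grind
  have f10 : 2 * a₁ * b₁ * α - (a₀ * b₁ + a₁ * b₀) * γ
    - (γ * (c₀ * d₁ + c₁ * d₀) - 2 * δ * c₀ * d₀) = 0 := by grind
  have f11 : 2 * a₁ * b₁ * β - (a₀ * b₁ + a₁ * b₀) * δ
    - (2 * γ * c₁ * d₁ - δ * (c₀ * d₁ + c₁ * d₀)) = 0 := by grind
  clear e0 e1 e2 e3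
  -- Up to sign, `y01` and `y10` are the components along `a dᵀ` and `b cᵀ` in the dual basis.
  have y01 : β * b₁ * c₀ - α * b₁ * c₁ - δ * b₀ * c₀ + γ * b₀ * c₁ = 0 := by
    linear_combination (b₁ * c₀ * f01 - b₁ * c₁ * f00 - b₀ * c₀ * f11 + b₀ * c₁ * f10) / 2
      - (β * b₁ * c₀ - α * b₁ * c₁ - δ * b₀ * c₀ + γ * b₀ * c₁) / 2 * (h + k)
  have y10 : γ * a₀ * d₁ - δ * a₀ * d₀ - α * a₁ * d₁ + β * a₁ * d₀ = 0 := by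
    linear_combination -(a₀ * d₁ * f10 - a₀ * d₀ * f11 - a₁ * d₁ * f00 + a₁ * d₀ * f01) / 2
      - (γ * a₀ * d₁ - δ * a₀ * d₀ - α * a₁ * d₁ + β * a₁ * d₀) / 2 * (h + k)
  refine ⟨α * b₁ * d₁ - β * b₁ * d₀ - γ * b₀ * d₁ + δ * b₀ * d₀,
    δ * a₀ * c₀ - γ * a₀ * c₁ - β * a₁ * c₀ + α * a₁ * c₁, ?_⟩
  have hx : x = vecOf α β γ δ := by
    funext k; fin_cases k <;> simp [vecOf, x0, x1, x2, x3]
  rw [hx]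
  congr 1
  · linear_combination a₀ * d₀ * y01 + b₀ * c₀ * y10 - α * ((a₀ * b₁ - a₁ * b₀) * k + h)
  · linear_combination a₀ * d₁ * y01 + b₀ * c₁ * y10 - β * ((a₀ * b₁ - a₁ * b₀) * k + h)
  · linear_combination a₁ * d₀ * y01 + b₁ * c₀ * y10 - γ * ((a₀ * b₁ - a₁ * b₀) * k + h)
  · linear_combination a₁ * d₁ * y01 + b₁ * c₁ * y10 - δ * ((a₀ * b₁ - a₁ * b₀) * k + h)

theorem tangent_mem {p q : Fin 3 → ℂ} {a₀ a₁ b₀ b₁ c₀ c₁ d₀ d₁ : ℂ} (hp : Frame p a₀ a₁ a₀ a₁)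
    (hq : Frame' q c₀ c₁ c₀ c₁) (h : a₀ * b₁ - a₁ * b₀ = 1) (k : c₀ * d₁ - c₁ * d₀ = 1)
    (s : ℂ) :
    vecOf (s * (a₀ * c₀) + (a₀ * d₀ + b₀ * c₀)) (s * (a₀ * c₁) + (a₀ * d₁ + b₀ * c₁))
      (s * (a₁ * c₀) + (a₁ * d₀ + b₁ * c₀)) (s * (a₁ * c₁) + (a₁ * d₁ + b₁ * c₁)) ∈
      lineOf p q := by
  have hI : Complex.I ^ 2 = -1 := Complex.I_sq
  obtain ⟨h0, h1, h2⟩ := hp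
  obtain ⟨k0, k1, k2⟩ := hq
  rw [mem_lineOf, h0, h1, h2, k0, k1, k2]
  simp [vecOf]
  refine ⟨?_, ?_, ?_, ?_⟩ <;> grind

theorem exists_Frame {p : Fin 3 → ℂ} (hp : dot p = 1) :
    ∃ a₀ a₁ b₀ b₁, a₀ * b₁ - a₁ * b₀ = 1 ∧ Frame p a₀ a₁ b₀ b₁ := by
  obtain ⟨a₀, a₁, b₀, b₁, h, h0, h1, h2⟩ := exists_frame hp
  exact ⟨a₀, a₁, b₀, b₁, h, h0, h1, h2⟩

theorem exists_Frame' {p : Fin 3 → ℂ} (hp : dot p = 1) :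
    ∃ a₀ a₁ b₀ b₁, a₀ * b₁ - a₁ * b₀ = 1 ∧ Frame' p a₀ a₁ b₀ b₁ := by
  obtain ⟨a₀, a₁, b₀, b₁, h, h0, h1, h2⟩ := exists_frame (p₁ := p 0) (p₂ := -p 1) (p₃ := p 2)
    (by rw [← hp, dot]; ring)
  exact ⟨a₀, a₁, b₀, b₁, h, h0, by linear_combination -h1, h2⟩

theorem exists_nullFrame {p : Fin 3 → ℂ} (hp : dot p = 0) (h0 : p ≠ 0) :
    ∃ a₀ a₁ b₀ b₁, a₀ * b₁ - a₁ * b₀ = 1 ∧ Frame p a₀ a₁ a₀ a₁ := by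
  obtain ⟨a₀, a₁, b₀, b₁, h, h0, h1, h2⟩ := exists_null hp (by
    rintro ⟨h, h', h''⟩
    apply h0
    funext k; fin_cases k <;> assumption)
  exact ⟨a₀, a₁, b₀, b₁, h, by linear_combination h0, by linear_combination h1,
    by linear_combination h2⟩

theorem exists_nullFrame' {p : Fin 3 → ℂ} (hp : dot p = 0) (h0 : p ≠ 0) :
    ∃ a₀ a₁ b₀ b₁, a₀ * b₁ - a₁ * b₀ = 1 ∧ Frame' p a₀ a₁ a₀ a₁ := by
  obtain ⟨a₀, a₁, b₀, b₁, h, h0, h1, h2⟩ := exists_null (p₁ := p 0) (p₂ := -p 1) (p₃ := p 2)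
    (by rw [← hp, dot]; ring) (by
    rintro ⟨h, h', h''⟩
    apply h0
    rw [neg_eq_zero] at h'
    funext k; fin_cases k <;> assumption)
  exact ⟨a₀, a₁, b₀, b₁, h, by linear_combination h0, by linear_combination -h1,
    by linear_combination h2⟩

theorem frame_supp' {p : Fin 3 → ℂ} {a₀ a₁ b₀ b₁ : ℂ} (h : a₀ * b₁ - a₁ * b₀ = 1)
    (hp : Frame' p a₀ a₁ b₀ b₁) :
    (SuppV (polar a₀ a₁ b₀ b₁) ↔ AxV (p 0) (p 1) (p 2)) ∧
    (SuppF (polar a₀ a₁ b₀ b₁) ↔ AxF (p 0) (p 1) (p 2)) ∧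
    (SuppE (polar a₀ a₁ b₀ b₁) ↔ AxE (p 0) (p 1) (p 2)) := by
  have := frame_supp h hp.h0 (p₂ := -p 1) (by linear_combination -hp.h1) hp.h2
  simpa [AxV, AxF, AxE] using this

/-- Criterion for lines that meet the quadric `Q = 0` in two points, with `p` and `q` normalised. -/
theorem liesOn_unit {p q : Fin 3 → ℂ} (hp : dot p = 1) (hq : dot q = 1) :
    LiesOn (8 * S6 - 5 * Q2 ^ 3) (lineOf p q) ↔
      (AxV (p 0) (p 1) (p 2) ∧ (AxF (q 0) (q 1) (q 2) ∨ AxE (q 0) (q 1) (q 2))) ∨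
      (AxV (q 0) (q 1) (q 2) ∧ (AxF (p 0) (p 1) (p 2) ∨ AxE (p 0) (p 1) (p 2))) := by
  obtain ⟨a₀, a₁, b₀, b₁, h, fp⟩ := exists_Frame hp
  obtain ⟨c₀, c₁, d₀, d₁, k, fq⟩ := exists_Frame' hq
  obtain ⟨h1, h2, h3⟩ := frame_supp h fp.h0 fp.h1 fp.h2
  obtain ⟨k1, k2, k3⟩ := frame_supp' k fq
  rw [← h1, ← h2, ← h3, ← k1, ← k2, ← k3, liesOn_iff]
  constructor
  · intro H
    refine supp_cases (polar_isOct h) (polar_isOct k) (diag_coeff fun s t => ?_)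
    rw [← sexticAt_vecOf]
    exact H _ (diag_mem fp fq h k s t)
  · intro H x hx
    obtain ⟨s, t, rfl⟩ := diag_of_mem fp fq h k hx
    rw [sexticAt_vecOf]
    have e := sextic_diag a₀ a₁ b₀ b₁ c₀ c₁ d₀ d₁ s t
    rw [Finset.sum_eq_zero] at e
    · simpa using e
    · intro k _
      have : polar a₀ a₁ b₀ b₁ k * polar c₀ c₁ d₀ d₁ k = 0 := by
        rcases H with ⟨H1, H2⟩ | ⟨H1, H2⟩
        · exact prod_zero H1 H2 k
        · rw [mul_comm]; exact prod_zero H1 H2 k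
      rw [this]; ring

theorem not_liesOn_tangent {p q : Fin 3 → ℂ} (hp : dot p = 0) (hq : dot q = 0) (hp0 : p ≠ 0)
    (hq0 : q ≠ 0) : ¬ LiesOn (8 * S6 - 5 * Q2 ^ 3) (lineOf p q) := by
  obtain ⟨a₀, a₁, b₀, b₁, h, fp⟩ := exists_nullFrame hp hp0
  obtain ⟨c₀, c₁, d₀, d₁, k, fq⟩ := exists_nullFrame' hq hq0
  rw [liesOn_iff]
  intro H
  refine tangent_false h k fun s => ?_
  rw [← sexticAt_vecOf]
  exact H _ (tangent_mem fp fq h k s)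

theorem exists_vecOf (x : Fin 4 → ℂ) : ∃ α β γ δ, x = vecOf α β γ δ := by
  have hI : Complex.I ^ 2 = -1 := Complex.I_sq
  refine ⟨x 0 + Complex.I * x 1, x 2 + Complex.I * x 3, -x 2 + Complex.I * x 3,
    x 0 - Complex.I * x 1, ?_⟩
  funext k
  fin_cases k <;> simp [vecOf] <;> grind

theorem sextic_pure (a₀ a₁ c₀ c₁ : ℂ) :
    sextic (a₀ * c₀) (a₀ * c₁) (a₁ * c₀) (a₁ * c₁) =
      6 * (a₀ * a₁ * (a₀ ^ 4 - a₁ ^ 4)) * (c₀ * c₁ * (c₀ ^ 4 - c₁ ^ 4)) := by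
  unfold sextic; ring

/-- The line `p x = 0` of the first ruling of `Q = 0` consists of the matrices `a cᵀ` with `a` fixed, so it
lies on the surface iff `f(a) = 0`. -/
theorem liesOn_left {p : Fin 3 → ℂ} (hp : dot p = 0) (hp0 : p ≠ 0) :
    LiesOn (8 * S6 - 5 * Q2 ^ 3) (lineOf p 0) ↔ p 0 * p 1 * p 2 = 0 := by
  have hI : Complex.I ^ 2 = -1 := Complex.I_sq
  have hI0 : Complex.I ≠ 0 := Complex.I_ne_zero
  obtain ⟨a₀, a₁, b₀, b₁, h, h0, h1, h2⟩ := exists_nullFrame hp hp0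
  have e : p 0 * p 1 * p 2 = 2 * Complex.I * (a₀ * a₁ * (a₀ ^ 4 - a₁ ^ 4)) := by
    rw [h0, h1, h2]; ring
  rw [e, liesOn_iff]
  constructor
  · intro H
    have := H (vecOf (a₀ * 1) (a₀ * 2) (a₁ * 1) (a₁ * 2)) (by
      rw [mem_lineOf, h0, h1, h2]
      simp [vecOf]
      refine ⟨?_, ?_, ?_, ?_⟩ <;> grind)
    rw [sexticAt_vecOf, sextic_pure] at this
    linear_combination (-Complex.I / 90) * this
  · intro H x hx
    obtain ⟨α, β, γ, δ, rfl⟩ := exists_vecOf x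
    rw [mem_lineOf, h0, h1, h2] at hx
    simp [vecOf] at hx
    obtain ⟨e0, e1, e2, e3⟩ := hx
    have f00 : a₀ * (a₁ * α - a₀ * γ) = 0 := by grind
    have f01 : a₀ * (a₁ * β - a₀ * δ) = 0 := by grind
    have f10 : a₁ * (a₁ * α - a₀ * γ) = 0 := by grind
    have f11 : a₁ * (a₁ * β - a₀ * δ) = 0 := by grind
    have z0 : a₁ * α - a₀ * γ = 0 := by
      linear_combination b₁ * f00 - b₀ * f10 - (a₁ * α - a₀ * γ) * h
    have z1 : a₁ * β - a₀ * δ = 0 := by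
      linear_combination b₁ * f01 - b₀ * f11 - (a₁ * β - a₀ * δ) * h
    have r1 : α = a₀ * (α * b₁ - γ * b₀) := by linear_combination -α * h - b₀ * z0
    have r2 : β = a₀ * (β * b₁ - δ * b₀) := by linear_combination -β * h - b₀ * z1
    have r3 : γ = a₁ * (α * b₁ - γ * b₀) := by linear_combination -γ * h - b₁ * z0
    have r4 : δ = a₁ * (β * b₁ - δ * b₀) := by linear_combination -δ * h - b₁ * z1
    have H' : a₀ * a₁ * (a₀ ^ 4 - a₁ ^ 4) = 0 := by simpa using H
    have r : sextic α β γ δ = sextic (a₀ * (α * b₁ - γ * b₀)) (a₀ * (β * b₁ - δ * b₀))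
        (a₁ * (α * b₁ - γ * b₀)) (a₁ * (β * b₁ - δ * b₀)) := by congr 1
    rw [sexticAt_vecOf, r, sextic_pure, H']
    ring

/-- The line `x p = 0` of the second ruling of `Q = 0` consists of the matrices `c aᵀ` with `a` fixed, so it
lies on the surface iff `f(a) = 0`. -/
theorem liesOn_right {p : Fin 3 → ℂ} (hp : dot p = 0) (hp0 : p ≠ 0) :
    LiesOn (8 * S6 - 5 * Q2 ^ 3) (lineOf 0 p) ↔ p 0 * p 1 * p 2 = 0 := by
  have hI : Complex.I ^ 2 = -1 := Complex.I_sq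
  have hI0 : Complex.I ≠ 0 := Complex.I_ne_zero
  obtain ⟨a₀, a₁, b₀, b₁, h, h0, h1, h2⟩ := exists_nullFrame' hp hp0
  have e : p 0 * p 1 * p 2 = -2 * Complex.I * (a₀ * a₁ * (a₀ ^ 4 - a₁ ^ 4)) := by
    rw [h0, h1, h2]; ring
  rw [e, liesOn_iff]
  constructor
  · intro H
    have := H (vecOf (1 * a₀) (1 * a₁) (2 * a₀) (2 * a₁)) (by
      rw [mem_lineOf, h0, h1, h2]
      simp [vecOf]
      refine ⟨?_, ?_, ?_, ?_⟩ <;> grind)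
    rw [sexticAt_vecOf, sextic_pure] at this
    linear_combination (Complex.I / 90) * this
  · intro H x hx
    obtain ⟨α, β, γ, δ, rfl⟩ := exists_vecOf x
    rw [mem_lineOf, h0, h1, h2] at hx
    simp [vecOf] at hx
    obtain ⟨e0, e1, e2, e3⟩ := hx
    have f00 : a₀ * (a₁ * α - a₀ * β) = 0 := by grind
    have f01 : a₀ * (a₁ * γ - a₀ * δ) = 0 := by grind
    have f10 : a₁ * (a₁ * α - a₀ * β) = 0 := by grind
    have f11 : a₁ * (a₁ * γ - a₀ * δ) = 0 := by grind
    have z0 : a₁ * α - a₀ * β = 0 := by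
      linear_combination b₁ * f00 - b₀ * f10 - (a₁ * α - a₀ * β) * h
    have z1 : a₁ * γ - a₀ * δ = 0 := by
      linear_combination b₁ * f01 - b₀ * f11 - (a₁ * γ - a₀ * δ) * h
    have r1 : α = (α * b₁ - β * b₀) * a₀ := by linear_combination -α * h - b₀ * z0
    have r2 : β = (α * b₁ - β * b₀) * a₁ := by linear_combination -β * h - b₁ * z0
    have r3 : γ = (γ * b₁ - δ * b₀) * a₀ := by linear_combination -γ * h - b₀ * z1
    have r4 : δ = (γ * b₁ - δ * b₀) * a₁ := by linear_combination -δ * h - b₁ * z1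
    have H' : a₀ * a₁ * (a₀ ^ 4 - a₁ ^ 4) = 0 := by simpa using H
    have r : sextic α β γ δ = sextic ((α * b₁ - β * b₀) * a₀) ((α * b₁ - β * b₀) * a₁)
        ((γ * b₁ - δ * b₀) * a₀) ((γ * b₁ - δ * b₀) * a₁) := by congr 1
    rw [sexticAt_vecOf, r, sextic_pure, H']
    ring

/-! ### Lines are classified by pairs up to scaling -/

/-- Every line is of the form `lineOf p q`: the vectors `p`, `q` are read off from the Plücker coordinates
of a basis. -/
theorem exists_lineOf {W : Submodule ℂ (Fin 4 → ℂ)} (hW : Module.finrank ℂ W = 2) :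
    ∃ p q, dot p = dot q ∧ ¬ (p = 0 ∧ q = 0) ∧ W = lineOf p q := by
  obtain ⟨b⟩ : Nonempty (Module.Basis (Fin 2) ℂ W) := ⟨Module.finBasisOfFinrankEq ℂ W hW⟩
  have hli := b.linearIndependent.map' W.subtype (Submodule.ker_subtype W)
  have hspan : ∀ x ∈ W, ∃ s t : ℂ, x = s • (b 0 : Fin 4 → ℂ) + t • (b 1 : Fin 4 → ℂ) := by
    intro x hx
    have := congrArg (Subtype.val) (b.sum_repr ⟨x, hx⟩)
    rw [Fin.sum_univ_two] at this
    exact ⟨_, _, this.symm⟩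
  generalize hv : (b 0 : Fin 4 → ℂ) = v at hspan
  generalize hw : (b 1 : Fin 4 → ℂ) = w at hspan
  have hli : ∀ s t : ℂ, s • v + t • w = 0 → s = 0 ∧ t = 0 := by
    rw [← LinearIndependent.pair_iff]
    convert hli using 1
    funext k; fin_cases k <;> simp [hv, hw]
  -- Half the sum and half the difference of the Plücker coordinates `v₀ wᵢ - vᵢ w₀` and their complements.
  obtain ⟨p, hp⟩ : ∃ p : Fin 3 → ℂ, p = ![(v 2 * w 3 - v 3 * w 2 + (v 0 * w 1 - w 0 * v 1)) / 2,
    (v 3 * w 1 - v 1 * w 3 + (v 0 * w 2 - w 0 * v 2)) / 2,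
    (v 1 * w 2 - v 2 * w 1 + (v 0 * w 3 - w 0 * v 3)) / 2] := ⟨_, rfl⟩
  obtain ⟨q, hq⟩ : ∃ q : Fin 3 → ℂ, q = ![(-(v 2 * w 3 - v 3 * w 2) + (v 0 * w 1 - w 0 * v 1)) / 2,
    (-(v 3 * w 1 - v 1 * w 3) + (v 0 * w 2 - w 0 * v 2)) / 2,
    (-(v 1 * w 2 - v 2 * w 1) + (v 0 * w 3 - w 0 * v 3)) / 2] := ⟨_, rfl⟩
  have hd : dot p = dot q := by
    rw [hp, hq]; simp [dot]; ring
  have h0 : ¬ (p = 0 ∧ q = 0) := by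
    rintro ⟨hp0, hq0⟩
    rw [hp0] at hp
    rw [hq0] at hq
    have p0 := congrFun hp 0
    have p1 := congrFun hp 1
    have p2 := congrFun hp 2
    have q0 := congrFun hq 0
    have q1 := congrFun hq 1
    have q2 := congrFun hq 2
    simp at p0 p1 p2 q0 q1 q2
    have key : ∀ i j, v i * w j = v j * w i := by
      intro i j
      fin_cases i <;> fin_cases j <;> simp <;> grind
    have hv0 : v = 0 := by
      funext i
      have h : (-w i) • v + (v i) • w = 0 := by
        funext j
        simp only [Pi.add_apply, Pi.smul_apply, smul_eq_mul, Pi.zero_apply]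
        linear_combination key i j
      exact (hli _ _ h).2
    exact one_ne_zero (hli 1 0 (by simp [hv0])).1
  refine ⟨p, q, hd, h0, Submodule.eq_of_le_of_finrank_eq ?_ ?_⟩
  · intro x hx
    obtain ⟨s, t, rfl⟩ := hspan x hx
    rw [mem_lineOf, hp, hq]
    simp
    refine ⟨?_, ?_, ?_, ?_⟩ <;> ring
  · rw [hW, finrank_lineOf hd h0]

/-- The line `lineOf p q` determines `(p, q)` up to a scalar. -/
theorem lineOf_eq {p q p' q' : Fin 3 → ℂ} (h : dot p = dot q) (h0 : ¬ (p = 0 ∧ q = 0))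
    (he : lineOf p q = lineOf p' q') : ∃ c : ℂ, p' = c • p ∧ q' = c • q := by
  unfold dot at h
  -- The vectors `m0`, ..., `m3` are the solutions `p y + y q` of `p x = x q`, for `y` a basis quaternion.
  have m0 : ![0, p 0 + q 0, p 1 + q 1, p 2 + q 2] ∈ lineOf p q := by
    rw [mem_lineOf]; simp; grind
  have m1 : ![-(p 0 + q 0), 0, p 2 - q 2, -(p 1 - q 1)] ∈ lineOf p q := by
    rw [mem_lineOf]; simp; grind
  have m2 : ![-(p 1 + q 1), -(p 2 - q 2), 0, p 0 - q 0] ∈ lineOf p q := by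
    rw [mem_lineOf]; simp; grind
  have m3 : ![-(p 2 + q 2), p 1 - q 1, -(p 0 - q 0), 0] ∈ lineOf p q := by
    rw [mem_lineOf]; simp; grind
  rw [he, mem_lineOf] at m0 m1 m2 m3
  simp at m0 m1 m2 m3
  have pp : ∀ i j, p' i * p j = p' j * p i := by
    intro i j; fin_cases i <;> fin_cases j <;> simp <;> grind
  have qq : ∀ i j, q' i * q j = q' j * q i := by
    intro i j; fin_cases i <;> fin_cases j <;> simp <;> grind
  have pq : ∀ i j, p' i * q j = q' j * p i := by
    intro i j; fin_cases i <;> fin_cases j <;> simp <;> grind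
  have hne : (∃ k, p k ≠ 0) ∨ (∃ k, q k ≠ 0) := by
    by_contra! hc
    exact h0 ⟨funext hc.1, funext hc.2⟩
  rcases hne with ⟨k, hk⟩ | ⟨k, hk⟩
  · refine ⟨p' k / p k, ?_, ?_⟩
    · funext j; simp only [Pi.smul_apply, smul_eq_mul]; field_simp; exact pp j k
    · funext j; simp only [Pi.smul_apply, smul_eq_mul]; field_simp; exact (pq k j).symm
  · refine ⟨q' k / q k, ?_, ?_⟩
    · funext j; simp only [Pi.smul_apply, smul_eq_mul]; field_simp; exact pq j k
    · funext j; simp only [Pi.smul_apply, smul_eq_mul]; field_simp; exact qq j k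

/-! ### Explicit axes -/

theorem exists_sqrt (z : ℂ) : ∃ w : ℂ, w ^ 2 = z := IsAlgClosed.exists_pow_nat_eq z (by norm_num)

/-- A square root of `1 / 2`; either choice gives the same set of edge axes. -/
noncomputable def sqrtHalf : ℂ := (exists_sqrt (1 / 2)).choose
/-- A square root of `1 / 3`; either choice gives the same set of face axes. -/
noncomputable def sqrtThird : ℂ := (exists_sqrt (1 / 3)).choose

theorem sqrtHalf_sq : sqrtHalf ^ 2 = 1 / 2 := (exists_sqrt (1 / 2)).choose_spec
theorem sqrtThird_sq : sqrtThird ^ 2 = 1 / 3 := (exists_sqrt (1 / 3)).choose_spec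
theorem sqrtHalf_ne : sqrtHalf ≠ 0 := by
  intro h; have := sqrtHalf_sq; rw [h] at this; norm_num at this
theorem sqrtThird_ne : sqrtThird ≠ 0 := by
  intro h; have := sqrtThird_sq; rw [h] at this; norm_num at this

/-- The sign `±1`. -/
def sgn (b : Bool) : ℂ := if b then 1 else -1

theorem sgn_sq (b : Bool) : sgn b ^ 2 = 1 := by cases b <;> simp [sgn]
theorem sgn_ne (b : Bool) : sgn b ≠ 0 := by cases b <;> simp [sgn]
theorem sgn_inj {b c : Bool} (h : sgn b = sgn c) : b = c := by
  cases b <;> cases c <;> simp [sgn] at h ⊢ <;> norm_num [eq_comm, neg_eq_iff_add_eq_zero] at h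
theorem exists_sgn {x κ : ℂ} (h : x ^ 2 = κ ^ 2) : ∃ b, x = sgn b * κ := by
  rcases sq_eq_sq_iff_eq_or_eq_neg.1 h with h | h
  · exact ⟨true, by simp [sgn, h]⟩
  · exact ⟨false, by simp [sgn, h]⟩

/-- Index set of the `8 + 12` unit vectors along face and edge axes of the octahedron. A face vector is
given by three signs, an edge vector by its zero coordinate and two signs. -/
abbrev FEIdx := (Fin 3 → Bool) ⊕ (Fin 3 × Bool × Bool)

/-- The vertex `eᵢ` of the octahedron. -/
def vAx (i : Fin 3) : Fin 3 → ℂ := Pi.single i 1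

/-- The unit vectors along face axes and edge axes. -/
noncomputable def feAx : FEIdx → Fin 3 → ℂ
  | .inl σ => fun k => sgn (σ k) * sqrtThird
  | .inr (i, b, c) => fun k => if k = i then 0 else if k = i + 1 then sgn b * sqrtHalf
      else sgn c * sqrtHalf

/-- The isotropic vectors with `i`-th coordinate zero, up to scaling; their coordinates after position `i`,
in cyclic order, are `1` and `±√-1`. -/
noncomputable def isoAx (i : Fin 3) (b : Bool) : Fin 3 → ℂ :=
  fun k => if k = i then 0 else if k = i + 1 then 1 else sgn b * Complex.I

/-- For a unit vector: it spans a face axis or an edge axis. -/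
def IsFE (p : Fin 3 → ℂ) : Prop := AxF (p 0) (p 1) (p 2) ∨ AxE (p 0) (p 1) (p 2)

theorem dot_smul (c : ℂ) (p : Fin 3 → ℂ) : dot (c • p) = c ^ 2 * dot p := by
  simp [dot]; ring

theorem dot_zero : dot 0 = 0 := by simp [dot]

theorem dot_vAx (i : Fin 3) : dot (vAx i) = 1 := by
  fin_cases i <;> simp [dot, vAx]

theorem axV_vAx (i : Fin 3) : AxV (vAx i 0) (vAx i 1) (vAx i 2) := by
  fin_cases i <;> simp [AxV, vAx]

theorem isFE_feAx (s : FEIdx) : IsFE (feAx s) := by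
  have h2 := sqrtHalf_sq
  have h3 := sqrtThird_sq
  rcases s with σ | ⟨i, b, c⟩
  · left; simp [AxF, feAx, mul_pow, sgn_sq, h3]
  · right; fin_cases i <;> simp [AxE, feAx, mul_pow, sgn_sq, h2]

theorem dot_of_isFE {p : Fin 3 → ℂ} (h : IsFE p) : dot p = 1 := by
  unfold IsFE AxF AxE at h
  unfold dot
  grind

theorem isFE_smul {p : Fin 3 → ℂ} (h : IsFE p) (b : Bool) : IsFE (sgn b • p) := by
  simpa [IsFE, AxF, AxE, mul_pow, sgn_sq, sgn_ne] using h

theorem dot_isoAx (i : Fin 3) (b : Bool) : dot (isoAx i b) = 0 := by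
  fin_cases i <;> simp [dot, isoAx, mul_pow, sgn_sq]

theorem prod_isoAx (i : Fin 3) (b : Bool) : isoAx i b 0 * isoAx i b 1 * isoAx i b 2 = 0 := by
  fin_cases i <;> simp [isoAx]

theorem isoAx_ne (i : Fin 3) (b : Bool) : isoAx i b ≠ 0 := by
  intro h
  have := congrFun h (i + 1)
  fin_cases i <;> simp [isoAx] at this

theorem exists_vAx {p : Fin 3 → ℂ} (hd : dot p = 1) (h : AxV (p 0) (p 1) (p 2)) :
    ∃ i b, p = sgn b • vAx i := by
  obtain ⟨h1, h2, h3⟩ := h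
  unfold dot at hd
  have key : ∃ i, p i ^ 2 = 1 ^ 2 ∧ ∀ j, j ≠ i → p j = 0 := by
    by_cases p0 : p 0 = 0
    · by_cases p1 : p 1 = 0
      · refine ⟨2, by grind, fun j hj => ?_⟩
        fin_cases j <;> simp_all
      · refine ⟨1, by grind, fun j hj => ?_⟩
        fin_cases j <;> simp_all
    · refine ⟨0, by grind, fun j hj => ?_⟩
      fin_cases j <;> simp_all
  obtain ⟨i, hi, hj⟩ := key
  obtain ⟨b, hb⟩ := exists_sgn hi
  refine ⟨i, b, ?_⟩
  funext j
  by_cases h : j = i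
  · subst h; simp [vAx, hb]
  · simp [vAx, hj j h, h]

theorem exists_feAx {p : Fin 3 → ℂ} (h : IsFE p) : ∃ s, p = feAx s := by
  rcases h with ⟨h0, h1, h2⟩ | ⟨h0, h1, h2⟩ | ⟨h0, h1, h2⟩ | ⟨h0, h1, h2⟩
  · rw [← sqrtThird_sq] at h0 h1 h2
    obtain ⟨b0, h0⟩ := exists_sgn h0
    obtain ⟨b1, h1⟩ := exists_sgn h1
    obtain ⟨b2, h2⟩ := exists_sgn h2
    refine ⟨.inl ![b0, b1, b2], ?_⟩
    funext k; fin_cases k <;> simp [feAx, *]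
  all_goals
    rw [← sqrtHalf_sq] at h1 h2
    obtain ⟨b, h1⟩ := exists_sgn h1
    obtain ⟨c, h2⟩ := exists_sgn h2
  · refine ⟨.inr (0, b, c), ?_⟩
    funext k; fin_cases k <;> simp [feAx, *]
  · refine ⟨.inr (1, b, c), ?_⟩
    funext k; fin_cases k <;> simp [feAx, *]
  · refine ⟨.inr (2, b, c), ?_⟩
    funext k; fin_cases k <;> simp [feAx, *]

theorem exists_isoAx {p : Fin 3 → ℂ} (hd : dot p = 0) (hp : p ≠ 0) (h : p 0 * p 1 * p 2 = 0) :
    ∃ i b, ∃ c : ℂ, c ≠ 0 ∧ p = c • isoAx i b := by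
  have hI : Complex.I ^ 2 = -1 := Complex.I_sq
  unfold dot at hd
  have key : ∃ i, p i = 0 ∧ p (i + 2) ^ 2 = (Complex.I * p (i + 1)) ^ 2 := by
    rcases mul_eq_zero.1 h with h | h
    · rcases mul_eq_zero.1 h with h | h
      · exact ⟨0, h, by simp; grind⟩
      · exact ⟨1, h, by simp; grind⟩
    · exact ⟨2, h, by simp; grind⟩
  obtain ⟨i, hi, h2⟩ := key
  obtain ⟨b, hb⟩ := exists_sgn h2
  have hpe : p = p (i + 1) • isoAx i b := by
    funext k
    fin_cases i <;> fin_cases k <;> simp [isoAx] at * <;> grind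
  refine ⟨i, b, p (i + 1), ?_, hpe⟩
  intro h0
  rw [h0, zero_smul] at hpe
  exact hp hpe

theorem vAx_smul {i j : Fin 3} {c : ℂ} (h : vAx i = c • vAx j) : i = j ∧ c = 1 := by
  have hj := congrFun h i
  have : i = j := by
    by_contra hij
    simp [vAx, hij] at hj
  subst this
  simp [vAx] at hj
  exact ⟨rfl, hj.symm⟩

theorem feAx_inj {s t : FEIdx} (h : feAx s = feAx t) : s = t := by
  have n2 := sqrtHalf_ne
  have n3 := sqrtThird_ne
  have key := congrFun h
  rcases s with σ | ⟨i, b, c⟩ <;> rcases t with τ | ⟨j, d, e⟩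
  · congr 1
    funext k
    apply sgn_inj
    simpa [feAx, n3] using key k
  · have := key j
    simp [feAx, n3, sgn_ne] at this
  · have := key i
    simp [feAx, n3, sgn_ne] at this
  · have hij : i = j := by
      by_contra hij
      have := key i
      simp only [feAx, if_true, if_neg hij] at this
      split_ifs at this <;> simp [n2, sgn_ne] at this
    subst hij
    have h1 : b = d := by
      have := key (i + 1)
      fin_cases i <;> simp [feAx, n2] at this <;> exact sgn_inj this
    have h2 : c = e := by
      have := key (i + 2)
      fin_cases i <;> simp [feAx, n2] at this <;> exact sgn_inj this
    rw [h1, h2]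

theorem isoAx_inj {i j : Fin 3} {b d : Bool} {c : ℂ} (h : isoAx i b = c • isoAx j d) :
    i = j ∧ b = d := by
  have key := congrFun h
  have hij : i = j := by
    by_contra hij
    have := key j
    simp only [isoAx, Pi.smul_apply, smul_eq_mul, if_true, if_neg (Ne.symm hij), mul_zero] at this
    split_ifs at this <;> simp [sgn_ne] at this
  subst hij
  refine ⟨rfl, ?_⟩
  have h1 := key (i + 1)
  have h2 := key (i + 2)
  fin_cases i <;> simp [isoAx] at h1 h2 <;> subst h1 <;> simp at h2 <;> exact sgn_inj h2

theorem not_axV_of_isFE {p : Fin 3 → ℂ} (h : IsFE p) : ¬ AxV (p 0) (p 1) (p 2) := by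
  unfold IsFE AxF AxE at h
  unfold AxV
  grind

theorem vAx_ne_feAx {i : Fin 3} {s : FEIdx} {c : ℂ} : vAx i ≠ c • feAx s := by
  intro h
  have h1 := axV_vAx i
  have hd := dot_vAx i
  have hc : c ≠ 0 := by
    rintro rfl
    rw [h] at hd; simp [dot] at hd
  rw [h] at h1
  apply not_axV_of_isFE (isFE_feAx s)
  simpa [AxV, hc] using h1

theorem feAx_ne_vAx {i : Fin 3} {s : FEIdx} {c : ℂ} : feAx s ≠ c • vAx i := by
  intro h
  apply not_axV_of_isFE (isFE_feAx s)
  rw [h]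
  have h1 := axV_vAx i
  simp [AxV] at h1 ⊢
  grind

/-! ### Counting -/

/-- Index set of the lines. The first summand holds the lines transverse to the quadric: a vertex axis on
one side, which the common scaling of `(p, q)` normalises to `eᵢ`, and a face or edge vector on the other. The
second summand holds the lines on the quadric. The leading Boolean is `true` when the two sides are
exchanged. -/
abbrev Idx := (Bool × Fin 3 × FEIdx) ⊕ (Bool × Fin 3 × Bool)

/-- The vector `p` of the line with a given index. -/
noncomputable def idxP : Idx → Fin 3 → ℂ
  | .inl (false, i, _) => vAx i
  | .inl (true, _, s) => feAx s
  | .inr (false, i, b) => isoAx i b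
  | .inr (true, _, _) => 0

/-- The vector `q` of the line with a given index. -/
noncomputable def idxQ : Idx → Fin 3 → ℂ
  | .inl (false, _, s) => feAx s
  | .inl (true, i, _) => vAx i
  | .inr (false, _, _) => 0
  | .inr (true, i, b) => isoAx i b

/-- `2 · 3 · (8 + 12) + 2 · 6 = 132`. -/
theorem card_idx : Fintype.card Idx = 132 := by
  simp [Idx, FEIdx]

theorem dot_feAx (s : FEIdx) : dot (feAx s) = 1 := dot_of_isFE (isFE_feAx s)

theorem dot_idx (k : Idx) : dot (idxP k) = dot (idxQ k) := by
  rcases k with ⟨_ | _, i, s⟩ | ⟨_ | _, i, b⟩ <;>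
    simp [idxP, idxQ, dot_vAx, dot_feAx, dot_isoAx, dot_zero]

theorem idx_ne (k : Idx) : ¬ (idxP k = 0 ∧ idxQ k = 0) := by
  rintro ⟨hp, hq⟩
  have h1 := congrArg dot hp
  rcases k with ⟨_ | _, i, s⟩ | ⟨_ | _, i, b⟩
  · simp [idxP, dot_vAx, dot_zero] at h1
  · simp [idxP, dot_feAx, dot_zero] at h1
  · exact isoAx_ne _ _ hp
  · exact isoAx_ne _ _ hq

theorem liesOn_idx (k : Idx) : LiesOn (8 * S6 - 5 * Q2 ^ 3) (lineOf (idxP k) (idxQ k)) := by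
  rcases k with ⟨_ | _, i, s⟩ | ⟨_ | _, i, b⟩
  · exact (liesOn_unit (dot_vAx i) (dot_feAx s)).2 (Or.inl ⟨axV_vAx i, isFE_feAx s⟩)
  · exact (liesOn_unit (dot_feAx s) (dot_vAx i)).2 (Or.inr ⟨axV_vAx i, isFE_feAx s⟩)
  · exact (liesOn_left (dot_isoAx i b) (isoAx_ne i b)).2 (prod_isoAx i b)
  · exact (liesOn_right (dot_isoAx i b) (isoAx_ne i b)).2 (prod_isoAx i b)

theorem idx_inj {k l : Idx} (h : lineOf (idxP k) (idxQ k) = lineOf (idxP l) (idxQ l)) : k = l := by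
  obtain ⟨c, hp, hq⟩ := lineOf_eq (dot_idx l) (idx_ne l) h.symm
  -- Comparing `p · p` separates transverse lines from lines on the quadric.
  have hd := (congrArg dot hp).symm
  rw [dot_smul] at hd
  have hc : c ≠ 0 := by
    rintro rfl
    exact idx_ne k ⟨by simpa using hp, by simpa using hq⟩
  rcases k with ⟨_ | _, i, s⟩ | ⟨_ | _, i, b⟩ <;> rcases l with ⟨_ | _, j, t⟩ | ⟨_ | _, j, d⟩ <;>
    simp [idxP, dot_vAx, dot_feAx, dot_isoAx, dot_zero, hc] at hd <;>
    simp only [idxP, idxQ] at hp hq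
  · obtain ⟨rfl, rfl⟩ := vAx_smul hp
    rw [one_smul] at hq
    rw [feAx_inj hq]
  · exact absurd hp vAx_ne_feAx
  · exact absurd hp feAx_ne_vAx
  · obtain ⟨rfl, rfl⟩ := vAx_smul hq
    rw [one_smul] at hp
    rw [feAx_inj hp]
  · obtain ⟨rfl, rfl⟩ := isoAx_inj hp
    rfl
  · exact absurd (by simpa using hp) (isoAx_ne i b)
  · exact absurd (by simpa using hq) (isoAx_ne i b)
  · obtain ⟨rfl, rfl⟩ := isoAx_inj hq
    rfl

/-- Every line on the surface is indexed. The cases are the position of the line relative to the quadric: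
contained in it, tangent to it, or transverse. -/
theorem idx_surj {W : Submodule ℂ (Fin 4 → ℂ)} (hW : IsLine W)
    (hF : LiesOn (8 * S6 - 5 * Q2 ^ 3) W) : ∃ k : Idx, W = lineOf (idxP k) (idxQ k) := by
  obtain ⟨p, q, hd, h0, rfl⟩ := exists_lineOf hW
  by_cases hp : dot p = 0
  · have hq : dot q = 0 := by rw [← hd, hp]
    by_cases p0 : p = 0
    · subst p0
      have q0 : q ≠ 0 := fun h => h0 ⟨rfl, h⟩
      obtain ⟨i, b, c, hc, rfl⟩ := exists_isoAx hq q0 ((liesOn_right hq q0).1 hF)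
      refine ⟨.inr (true, i, b), ?_⟩
      rw [← lineOf_smul hc (idxP _)]
      simp [idxP, idxQ]
    · by_cases q0 : q = 0
      · subst q0
        obtain ⟨i, b, c, hc, rfl⟩ := exists_isoAx hp p0 ((liesOn_left hp p0).1 hF)
        refine ⟨.inr (false, i, b), ?_⟩
        rw [← lineOf_smul hc (idxP _)]
        simp [idxP, idxQ]
      · exact absurd hF (not_liesOn_tangent hp hq p0 q0)
  · obtain ⟨r, hr⟩ := exists_sqrt (dot p)
    have r0 : r ≠ 0 := by
      rintro rfl
      simp [← hr] at hp
    have hp1 : dot (r⁻¹ • p) = 1 := by rw [dot_smul, ← hr]; field_simp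
    have hq1 : dot (r⁻¹ • q) = 1 := by rw [dot_smul, ← hd, ← hr]; field_simp
    rw [← lineOf_smul (inv_ne_zero r0)] at hF ⊢
    generalize r⁻¹ • p = p at *
    generalize r⁻¹ • q = q at *
    rcases (liesOn_unit hp1 hq1).1 hF with ⟨h1, h2⟩ | ⟨h1, h2⟩
    · obtain ⟨i, b, rfl⟩ := exists_vAx hp1 h1
      obtain ⟨s, hs⟩ := exists_feAx (isFE_smul h2 b)
      refine ⟨.inl (false, i, s), ?_⟩
      rw [← lineOf_smul (sgn_ne b) (idxP _)]
      simp [idxP, idxQ, ← hs, smul_smul, ← pow_two, sgn_sq]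
    · obtain ⟨i, b, rfl⟩ := exists_vAx hq1 h1
      obtain ⟨s, hs⟩ := exists_feAx (isFE_smul h2 b)
      refine ⟨.inl (true, i, s), ?_⟩
      rw [← lineOf_smul (sgn_ne b) (idxP _)]
      simp [idxP, idxQ, ← hs, smul_smul, ← pow_two, sgn_sq]

/-- The sextic surface `8·S₆ - 5·Q³ = 0` in ℙ³ contains exactly `132` lines. -/
theorem sextic_132_lines :
    Nat.card {W : Submodule ℂ (Fin 4 → ℂ) // IsLine W ∧ LiesOn (8 * S6 - 5 * Q2 ^ 3) W} =
      132 := by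
  rw [← card_idx, ← Nat.card_eq_fintype_card]
  refine (Nat.card_congr (Equiv.ofBijective (fun k : Idx => ⟨lineOf (idxP k) (idxQ k),
    finrank_lineOf (dot_idx k) (idx_ne k), liesOn_idx k⟩) ⟨?_, ?_⟩)).symm
  · intro k l h
    exact idx_inj (congrArg Subtype.val h)
  · rintro ⟨W, hW, hF⟩
    obtain ⟨k, rfl⟩ := idx_surj hW hF
    exact ⟨k, rfl⟩
end

section
/- Let S : F = 0 be a smooth surface of degree d ≥ 4 in ℙ³ containing d distinct lines L₁, …, L_d that are all contained in a common plane (a 3-dimensional linear subspace of ℂ⁴). Suppose that for each i, the number of lines lying on S that meet L_i nontrivially and are distinct from L_i is at most 8d − 14 (by Segre, this holds whenever L_i is not a line of the second kind). Then S contains at most d·(7d − 12) lines. -/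
/-!
Every line `W` of `S` meets the plane `P`, and the curve `S ∩ P` is the union of the `L i`
(`exists_mem_of_eval_eq_zero`), so `W` meets some `L i`.  Since coplanar lines meet, the `d - 1`
other lines `L j` are among the at most `8d - 14` lines meeting `L i`, so at most `7d - 13` lines
outside the family meet `L i`.  Summing over `i` and adding the family itself gives at most
`d + d (7d - 13) = d (7d - 12)` lines.

That `S ∩ P` is the union of the `L i` rests on two facts.

* `F` does not vanish on `P` (`not_vanish_on_plane`): otherwise the gradient of `F` at points of `P`
  annihilates `P`, and the derivative of `F` in a direction transverse to `P`, a form of degree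
  `d - 1 > 0`, has a nonzero zero on `P`, which is then a singular point of `S`.
* If `p ∈ P` is a zero of `F` on none of the `L i`, then for generic `q ∈ P` the line through `p`
  and `q` meets the `L i` in `d` distinct points other than `p`.  The restriction of `F` to this line
  has degree at most `d` and `d + 1` zeros, so it vanishes.  Hence `F` vanishes on a generic part
  of `P`, and thus on all of `P` (`vanish_of_generic`).

No finiteness of the set of lines has to be proved: `Nat.card` of an infinite type is `0`, so
the bound is trivial if `S` contains infinitely many lines; otherwise all sets counted are finite.
-/

open MvPolynomial

/-- The surface `F = 0` is smooth: no nonzero point where all partials vanish. -/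
def SmoothSurface (F : MvPolynomial (Fin 4) ℂ) : Prop :=
  ∀ v : Fin 4 → ℂ, v ≠ 0 → ∃ i : Fin 4, eval v (pderiv i F) ≠ 0

/-! ### Restriction to lines -/

/-- The restriction `F(v + T w)` of `F` to the affine line through `v` with direction `w`, as a
polynomial in `T`. -/
noncomputable def lineRestr (v w : Fin 4 → ℂ) (F : MvPolynomial (Fin 4) ℂ) : Polynomial ℂ :=
  aeval (fun i => Polynomial.C (w i) * Polynomial.X + Polynomial.C (v i)) F

lemma eval_lineRestr (v w : Fin 4 → ℂ) (F : MvPolynomial (Fin 4) ℂ) (t : ℂ) :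
    (lineRestr v w F).eval t = eval (v + t • w) F := by
  unfold lineRestr
  induction F using MvPolynomial.induction_on with
  | C a => simp
  | add p q hp hq => simp [hp, hq]
  | mul_X p i hp =>
    rw [map_mul, Polynomial.eval_mul, hp]
    simp
    left
    ring

lemma natDegree_lineRestr_le {d : ℕ} (v w : Fin 4 → ℂ) {F : MvPolynomial (Fin 4) ℂ}
    (hF : F.IsHomogeneous d) : (lineRestr v w F).natDegree ≤ d := by
  have := aeval_natDegree_le F hF.totalDegree_le
    (fun i => Polynomial.C (w i) * Polynomial.X + Polynomial.C (v i))
    (fun i => Polynomial.natDegree_linear_le)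
  simpa [lineRestr] using this

/-- The chain rule at `T = 0`. -/
lemma derivative_lineRestr (v w : Fin 4 → ℂ) (F : MvPolynomial (Fin 4) ℂ) :
    (Polynomial.derivative (lineRestr v w F)).eval 0 = ∑ i, w i * eval v (pderiv i F) := by
  induction F using MvPolynomial.induction_on with
  | C a => simp [lineRestr]
  | add p q hp hq =>
    have h : lineRestr v w (p + q) = lineRestr v w p + lineRestr v w q := by simp [lineRestr]
    rw [h]
    simp [hp, hq, mul_add, Finset.sum_add_distrib]
  | mul_X p i hp =>
    have h : lineRestr v w (p * X i) = lineRestr v w p *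
        (Polynomial.C (w i) * Polynomial.X + Polynomial.C (v i)) := by simp [lineRestr]
    have h0 : (lineRestr v w p).eval 0 = eval v p := by simp [eval_lineRestr]
    rw [h]
    simp [hp, h0, pderiv_X, mul_add, Finset.sum_add_distrib, Finset.sum_mul, Pi.single_apply,
      apply_ite, Finset.sum_ite_eq]
    rw [mul_comm (eval v p)]
    congr 1
    exact Finset.sum_congr rfl fun j _ => by ring

/-! ### Smooth surfaces contain no plane -/

lemma eval_smul_of_isHomogeneous {n : ℕ} {G : MvPolynomial (Fin 4) ℂ} (hG : G.IsHomogeneous n)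
    (c : ℂ) (v : Fin 4 → ℂ) : eval (c • v) G = c ^ n * eval v G := by
  rw [eval_eq', eval_eq', Finset.mul_sum]
  refine Finset.sum_congr rfl fun m hm => ?_
  have h : ∑ i, m i = n := by
    have := hG (mem_support_iff.mp hm)
    rw [Finsupp.weight_apply, Finsupp.sum_fintype _ _ (by simp)] at this
    simpa using this
  simp only [Pi.smul_apply, smul_eq_mul, mul_pow, Finset.prod_mul_distrib]
  rw [Finset.prod_pow_eq_pow_sum, h]
  ring

/-- A binary form of positive degree over `ℂ` has a nontrivial zero. -/
lemma exists_zero_on_span {n : ℕ} (hn : n ≠ 0) {G : MvPolynomial (Fin 4) ℂ}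
    (hG : G.IsHomogeneous n) (a b : Fin 4 → ℂ) :
    eval b G = 0 ∨ ∃ t : ℂ, eval (a + t • b) G = 0 := by
  by_cases hdeg : (lineRestr a b G).degree = 0
  · left
    -- `G (a + T b)` is a constant `c`, so `G (b + T a) = c Tⁿ` for `T ≠ 0`, hence also at `T = 0`.
    obtain ⟨c, hc⟩ : ∃ c, lineRestr a b G = Polynomial.C c :=
      ⟨_, Polynomial.eq_C_of_degree_eq_zero hdeg⟩
    have hzero : lineRestr b a G - Polynomial.C c * Polynomial.X ^ n = 0 := by
      refine Polynomial.eq_zero_of_infinite_isRoot _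
        (((Set.finite_singleton (0 : ℂ)).infinite_compl).mono fun t ht => ?_)
      have ht0 : t ≠ 0 := ht
      have h1 := eval_lineRestr a b G t⁻¹
      rw [hc, Polynomial.eval_C] at h1
      have h2 : b + t • a = t • (a + t⁻¹ • b) := by
        rw [smul_add, smul_smul, mul_inv_cancel₀ ht0, one_smul, add_comm]
      change Polynomial.eval t _ = 0
      rw [Polynomial.eval_sub, eval_lineRestr, h2, eval_smul_of_isHomogeneous hG, ← h1]
      rw [Polynomial.eval_mul, Polynomial.eval_C, Polynomial.eval_pow, Polynomial.eval_X]
      ring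
    have := congrArg (Polynomial.eval 0) hzero
    simpa [eval_lineRestr, hn] using this
  · right
    obtain ⟨t, ht⟩ := IsAlgClosed.exists_root _ hdeg
    exact ⟨t, by rw [← eval_lineRestr]; exact ht⟩

/-- A smooth surface of degree at least `2` contains no plane. -/
lemma not_vanish_on_plane {d : ℕ} (hd : 2 ≤ d) {F : MvPolynomial (Fin 4) ℂ}
    (hF : F.IsHomogeneous d) (hsmooth : SmoothSurface F)
    {P : Submodule ℂ (Fin 4 → ℂ)} (hP : Module.finrank ℂ P = 3)
    (hvan : ∀ v ∈ P, eval v F = 0) : False := by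
  have htan : ∀ v ∈ P, ∀ w ∈ P, ∑ i, w i * eval v (pderiv i F) = 0 := by
    intro v hv w hw
    rw [← derivative_lineRestr]
    have : lineRestr v w F = 0 := Polynomial.funext fun t => by
      rw [eval_lineRestr, hvan _ (P.add_mem hv (P.smul_mem t hw)), Polynomial.eval_zero]
    simp [this]
  have hPtop : P ≠ ⊤ := by
    rintro rfl
    simp at hP
  obtain ⟨e, -, he⟩ := SetLike.exists_of_lt hPtop.lt_top
  let G : MvPolynomial (Fin 4) ℂ := ∑ i, C (e i) * pderiv i F
  have hG : G.IsHomogeneous (d - 1) := IsHomogeneous.sum _ _ _ fun i _ => by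
    simpa using (isHomogeneous_C (Fin 4) (e i)).mul (hF.pderiv (i := i))
  have hGe : ∀ v, eval v G = ∑ i, e i * eval v (pderiv i F) := fun v => by simp [G]
  obtain ⟨v, hvP, hv0, hvG⟩ : ∃ v ∈ P, v ≠ 0 ∧ eval v G = 0 := by
    let B := Module.finBasisOfFinrankEq ℂ P hP
    have hli := B.linearIndependent
    rcases exists_zero_on_span (by omega) hG (B 0 : Fin 4 → ℂ) (B 1 : Fin 4 → ℂ) with h | ⟨t, h⟩
    · exact ⟨_, (B 1).2, by simpa using B.ne_zero 1, h⟩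
    · refine ⟨_, (B 0 + t • B 1).2, ?_, h⟩
      intro h0
      have h1 : B 0 + t • B 1 = 0 := Subtype.ext h0
      have := congrArg (fun x => B.repr x 0) h1
      simp at this
  obtain ⟨i, hi⟩ := hsmooth v hv0
  apply hi
  let φ : (Fin 4 → ℂ) →ₗ[ℂ] ℂ := ∑ i, eval v (pderiv i F) • LinearMap.proj i
  have hφ : ∀ w, φ w = ∑ i, w i * eval v (pderiv i F) := fun w => by simp [φ, mul_comm]
  have hlt : P < LinearMap.ker φ := by
    refine SetLike.lt_iff_le_and_exists.2 ⟨fun w hw => ?_, e, ?_, he⟩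
    · rw [LinearMap.mem_ker, hφ, htan v hvP w hw]
    · rw [LinearMap.mem_ker, hφ, ← hGe, hvG]
  have hker : LinearMap.ker φ = ⊤ := by
    apply Submodule.eq_top_of_finrank_eq
    have h1 := Submodule.finrank_lt_finrank_of_lt hlt
    have h2 := (LinearMap.ker φ).finrank_le
    simp at h2 ⊢
    omega
  have : φ (Pi.single i 1) = 0 := by
    rw [← LinearMap.mem_ker, hker]
    trivial
  simpa [hφ, Pi.single_apply] using this

/-! ### The plane section -/

/-- If `F` vanishes on the translate by `p` of the complement in `P` of finitely many proper
subspaces, then it vanishes on `P`. -/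
lemma vanish_of_generic {ι : Type*} [Finite ι] (F : MvPolynomial (Fin 4) ℂ)
    {P : Submodule ℂ (Fin 4 → ℂ)} (B : ι → Submodule ℂ (Fin 4 → ℂ)) (hB : ∀ i, ¬ P ≤ B i)
    {p : Fin 4 → ℂ} (hp : p ∈ P)
    (h : ∀ q ∈ P, (∀ i, q ∉ B i) → eval (p + q) F = 0) : ∀ v ∈ P, eval v F = 0 := by
  obtain ⟨q₀, hq₀P, hq₀⟩ : ∃ q ∈ P, ∀ i, q ∉ B i := by
    by_contra! hcon
    obtain ⟨i, hi⟩ := Subspace.exists_eq_top_of_iUnion_eq_univ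
      (p := fun i => (B i).comap P.subtype) (by
        ext ⟨q, hq⟩
        simpa using hcon q hq)
    exact hB i (Submodule.comap_subtype_eq_top.1 hi)
  intro v hv
  -- On a line with generic direction `q₀`, each proper subspace is met in at most one point.
  have hzero : lineRestr v q₀ F = 0 := by
    have hfin : (⋃ i, {t : ℂ | v - p + t • q₀ ∈ B i}).Finite := by
      refine Set.finite_iUnion fun i => Set.Subsingleton.finite fun s hs t ht => ?_
      by_contra hst
      apply hq₀ i
      have h1 : (s - t) • q₀ ∈ B i := by
        have := (B i).sub_mem hs ht
        rwa [add_sub_add_left_eq_sub, ← sub_smul] at this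
      exact ((B i).smul_mem_iff (sub_ne_zero.2 hst)).1 h1
    refine Polynomial.eq_zero_of_infinite_isRoot _ (hfin.infinite_compl.mono fun t ht => ?_)
    change Polynomial.eval t _ = 0
    rw [eval_lineRestr]
    have := h (v - p + t • q₀) (P.add_mem (P.sub_mem hv hp) (P.smul_mem t hq₀P)) (by simpa using ht)
    rwa [← add_assoc, add_sub_cancel] at this
  simpa [hzero] using (eval_lineRestr v q₀ F 0).symm

lemma inf_ne_bot_of_finrank {U V X : Submodule ℂ (Fin 4 → ℂ)} (hU : U ≤ X) (hV : V ≤ X)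
    (h : Module.finrank ℂ X < Module.finrank ℂ U + Module.finrank ℂ V) : U ⊓ V ≠ ⊥ := by
  intro h0
  have h1 := Submodule.finrank_sup_add_finrank_inf_eq U V
  have h2 := Submodule.finrank_mono (sup_le hU hV)
  rw [h0, finrank_bot] at h1
  omega

/-- The plane section is the union of the `d` given lines. -/
lemma exists_mem_of_eval_eq_zero {d : ℕ} (hd : 2 ≤ d)
    {F : MvPolynomial (Fin 4) ℂ} (hF : F.IsHomogeneous d) (hsmooth : SmoothSurface F)
    {P : Submodule ℂ (Fin 4 → ℂ)} (hP : Module.finrank ℂ P = 3)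
    {L : Fin d → Submodule ℂ (Fin 4 → ℂ)} (hinj : Function.Injective L)
    (hlines : ∀ i, IsLine (L i) ∧ LiesOn F (L i) ∧ L i ≤ P)
    {p : Fin 4 → ℂ} (hp : p ∈ P) (hpF : eval p F = 0) : ∃ i, p ∈ L i := by
  classical
  by_contra! hpL
  have hL2 : ∀ i, Module.finrank ℂ (L i) = 2 := fun i => (hlines i).1
  -- Outside these subspaces, `q` lies on no `L i` and the points of `L i` on the line `pq` are
  -- pairwise distinct.
  let B : Fin d × Fin d → Submodule ℂ (Fin 4 → ℂ) := fun x =>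
    if x.1 = x.2 then L x.1 else Submodule.span ℂ {p} ⊔ (L x.1 ⊓ L x.2)
  have hB2 : ∀ x, Module.finrank ℂ (B x) ≤ 2 := by
    rintro ⟨i, j⟩
    by_cases hij : i = j
    · rw [show B (i, j) = L i from if_pos hij, hL2]
    · rw [show B (i, j) = Submodule.span ℂ {p} ⊔ (L i ⊓ L j) from if_neg hij]
      have hlt : L i ⊓ L j < L i := by
        refine lt_of_le_of_ne inf_le_left fun h => hij (hinj ?_)
        exact Submodule.eq_of_le_of_finrank_eq (inf_eq_left.1 h) (by rw [hL2, hL2])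
      have h1 := Submodule.finrank_lt_finrank_of_lt hlt
      have h2 := Submodule.finrank_sup_add_finrank_inf_eq (Submodule.span ℂ {p}) (L i ⊓ L j)
      have h3 := finrank_span_le_card (R := ℂ) ({p} : Set (Fin 4 → ℂ))
      simp at h3
      have := hL2 i
      omega
  refine not_vanish_on_plane hd hF hsmooth hP (vanish_of_generic F B (fun x hx => ?_) hp ?_)
  · have := Submodule.finrank_mono hx
    have := hB2 x
    omega
  intro q hq hqB
  have hqL : ∀ i, q ∉ L i := fun i => by simpa [B] using hqB (i, i)
  have hex : ∀ i, ∃ t : ℂ, p + t • q ∈ L i := by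
    intro i
    have hle : L i ⊔ Submodule.span ℂ {q} ≤ P :=
      sup_le (hlines i).2.2 (by simpa [Submodule.span_le] using hq)
    have hlt : L i < L i ⊔ Submodule.span ℂ {q} := by
      refine lt_of_le_of_ne le_sup_left fun h => hqL i ?_
      rw [h]
      exact Submodule.mem_sup_right (Submodule.mem_span_singleton_self q)
    have h1 := Submodule.finrank_lt_finrank_of_lt hlt
    rw [hL2] at h1
    have hpm : p ∈ L i ⊔ Submodule.span ℂ {q} := by
      rw [Submodule.eq_of_le_of_finrank_le hle (by omega)]
      exact hp
    obtain ⟨y, hy, z, hz, rfl⟩ := Submodule.mem_sup.1 hpm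
    obtain ⟨s, rfl⟩ := Submodule.mem_span_singleton.1 hz
    exact ⟨-s, by simpa using hy⟩
  choose t ht using hex
  have ht0 : ∀ i, t i ≠ 0 := fun i h => hpL i (by simpa [h] using ht i)
  have htinj : Function.Injective t := by
    intro i j hij
    by_contra hne
    have hm : p + t i • q ∈ L i ⊓ L j := ⟨ht i, by rw [hij]; exact ht j⟩
    have hq' : t i • q ∈ B (i, j) := by
      simp only [B, hne, if_false]
      have := Submodule.sub_mem _ (Submodule.mem_sup_right (S := Submodule.span ℂ {p}) hm)
        (Submodule.mem_sup_left (T := L i ⊓ L j) (Submodule.mem_span_singleton_self p))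
      simpa using this
    exact hqB (i, j) ((Submodule.smul_mem_iff _ (ht0 i)).1 hq')
  have hzero : lineRestr p q F = 0 := by
    refine Polynomial.eq_zero_of_natDegree_lt_card_of_eval_eq_zero _
      (f := fun o : Option (Fin d) => o.elim 0 t) ?_ ?_ ?_
    · rintro (_ | i) (_ | j) h
      · rfl
      · exact absurd h.symm (ht0 j)
      · exact absurd h (ht0 i)
      · exact congrArg some (htinj h)
    · rintro (_ | i)
      · simp [eval_lineRestr, hpF]
      · simpa [eval_lineRestr] using (hlines i).2.1 _ (ht i)
    · have := natDegree_lineRestr_le p q hF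
      simp
      omega
  simpa [hzero] using (eval_lineRestr p q F 1).symm

/-! ### Counting lines -/

/-- Let `S : F = 0` be a smooth surface of degree `d ≥ 4` containing `d` distinct coplanar
lines `L₁, …, L_d`.  If each `L_i` is met nontrivially by at most `8d - 14` other lines of
`S` (which, by Segre, holds whenever `L_i` is not of the second kind), then `S` contains
at most `d(7d - 12)` lines. -/
theorem uniform_bound_coplanar (d : ℕ) (hd : 4 ≤ d)
    (F : MvPolynomial (Fin 4) ℂ) (hF : F.IsHomogeneous d)
    (hsmooth : SmoothSurface F)
    (P : Submodule ℂ (Fin 4 → ℂ)) (hP : Module.finrank ℂ P = 3)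
    (L : Fin d → Submodule ℂ (Fin 4 → ℂ)) (hinj : Function.Injective L)
    (hlines : ∀ i, IsLine (L i) ∧ LiesOn F (L i) ∧ L i ≤ P)
    (hmeet : ∀ i, Nat.card {W : Submodule ℂ (Fin 4 → ℂ) //
        IsLine W ∧ LiesOn F W ∧ W ≠ L i ∧ W ⊓ L i ≠ ⊥} ≤ 8 * d - 14) :
    Nat.card {W : Submodule ℂ (Fin 4 → ℂ) // IsLine W ∧ LiesOn F W} ≤
      d * (7 * d - 12) := by
  classical
  set T : Set (Submodule ℂ (Fin 4 → ℂ)) := {W | IsLine W ∧ LiesOn F W} with hT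
  let M : Fin d → Set (Submodule ℂ (Fin 4 → ℂ)) := fun i =>
    {W | IsLine W ∧ LiesOn F W ∧ W ≠ L i ∧ W ⊓ L i ≠ ⊥}
  change Nat.card T ≤ _
  rw [Nat.card_coe_set_eq]
  by_cases hfin : T.Finite
  swap
  · rw [Set.Infinite.ncard hfin]
    exact Nat.zero_le _
  have hMfin : ∀ i, (M i).Finite := fun i => hfin.subset fun W hW => ⟨hW.1, hW.2.1⟩
  have hM : ∀ i, (M i).ncard ≤ 8 * d - 14 := fun i => by
    rw [← Nat.card_coe_set_eq]
    exact hmeet i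
  have hR : (Set.range L).ncard = d := by
    rw [← Set.image_univ, Set.ncard_image_of_injective _ hinj, Set.ncard_univ, Nat.card_fin]
  have hMR : ∀ i, (M i \ Set.range L).ncard ≤ 7 * d - 13 := by
    intro i
    have hsub : Set.range L \ {L i} ⊆ M i ∩ Set.range L := by
      rintro _ ⟨⟨j, rfl⟩, hj⟩
      refine ⟨⟨(hlines j).1, (hlines j).2.1, hj, ?_⟩, j, rfl⟩
      refine inf_ne_bot_of_finrank (hlines j).2.2 (hlines i).2.2 ?_
      rw [hP, (hlines j).1, (hlines i).1]
      norm_num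
    have h1 := Set.ncard_le_ncard hsub ((hMfin i).inter_of_left _)
    rw [Set.ncard_sdiff_singleton_of_mem (Set.mem_range_self i), hR] at h1
    have h2 := Set.ncard_inter_add_ncard_sdiff_eq_ncard (M i) (Set.range L) (hMfin i)
    have h3 := hM i
    omega
  have hcover : T ⊆ Set.range L ∪ ⋃ i, (M i \ Set.range L) := by
    rintro W ⟨hW, hWF⟩
    by_cases hWL : W ∈ Set.range L
    · exact Or.inl hWL
    right
    have hWP : W ⊓ P ≠ ⊥ := inf_ne_bot_of_finrank le_top le_top (by
      rw [hP, hW]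
      simp)
    obtain ⟨v, hv, hv0⟩ := Submodule.exists_mem_ne_zero_of_ne_bot hWP
    obtain ⟨i, hi⟩ := exists_mem_of_eval_eq_zero (by omega) hF hsmooth hP hinj hlines hv.2
      (hWF v hv.1)
    refine Set.mem_iUnion.2 ⟨i, ⟨hW, hWF, fun h => hWL ⟨i, h.symm⟩, ?_⟩, hWL⟩
    exact (Submodule.ne_bot_iff _).2 ⟨v, ⟨hv.1, hi⟩, hv0⟩
  have hUfin : (⋃ i, (M i \ Set.range L)).Finite := Set.finite_iUnion fun i => (hMfin i).sdiff
  calc T.ncard ≤ (Set.range L ∪ ⋃ i, (M i \ Set.range L)).ncard :=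
        Set.ncard_le_ncard hcover ((Set.finite_range L).union hUfin)
    _ ≤ (Set.range L).ncard + (⋃ i, (M i \ Set.range L)).ncard := Set.ncard_union_le _ _
    _ ≤ d + ∑ i : Fin d, (M i \ Set.range L).ncard := by
        rw [hR]
        gcongr
        exact Set.ncard_iUnion_le_of_fintype _
    _ ≤ d + ∑ _i : Fin d, (7 * d - 13) := by
        gcongr with i
        exact hMR i
    _ = d * (7 * d - 12) := by
        rw [Finset.sum_const, Finset.card_univ, Fintype.card_fin, smul_eq_mul]
        have : 7 * d - 12 = (7 * d - 13) + 1 := by omega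
        rw [this]
        ring
end

section
/- Let d ≥ 5 be an integer with gcd(d, d−2) = 1 (equivalently, d odd). Then the smooth surface R_d : x^{d−1}y + xy^{d−1} + z^{d−1}t + zt^{d−1} = 0 in ℙ³ contains a family of d(d−2) + 4 pairwise disjoint lines, i.e., there exist d(d−2)+4 distinct 2-dimensional subspaces of ℂ⁴, each lying on R_d, any two of which intersect only in {0}. -/
/-!
Write `f(x, y) = x^{d-1}y + xy^{d-1} = xy(x^{d-2} + y^{d-2})`, so that the surface is
`f(x, y) + f(z, t) = 0`.

*Smoothness.* The gradient of `f` vanishes only at the origin: if `x, y ≠ 0`, then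
`(d-1)x^{d-2} + y^{d-2} = 0 = x^{d-2} + (d-1)y^{d-2}`, and the determinant `(d-1)² - 1` of this
system is not zero (`grad_eq_zero`).

*Lines.* Two kinds of lines are used.
* The graph `z = ax`, `t = by` lies on the surface iff `a^{d-1}b = ab^{d-1} = -1`. Since `d` is odd
  (this is where the gcd condition enters), every `α` with `α^{d(d-2)} = 1` gives a solution
  `a = -α`, `b = -α^{1-d}`. Two graphs are disjoint iff they differ in both `a` and `b`; as
  `(d-1)² = d(d-2) + 1`, the number `α` is recovered from `α^{d-1}`, so the `d(d-2)` graphs are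
  pairwise disjoint.
* The join of a zero `p` of `f` on the line `z = t = 0` and a zero `q` of `f` on `x = y = 0`. Two
  joins are disjoint iff both their `p` and their `q` are different points, and a join is disjoint
  from the graphs as soon as exactly one of `p₀q₁`, `p₁q₀` vanishes. With `ω ≠ 1` a root of unity
  of order dividing `d - 2`, the four joins with
  `p = (1:-1), (1:-ω), (1:0), (0:1)` and `q = (1:0), (0:1), (1:-1), (1:-ω)` qualify.
-/

open MvPolynomial

/-- The polynomial `x^{d-1}y + xy^{d-1} + z^{d-1}t + zt^{d-1}` defining the surface `R_d`. -/
noncomputable def ramsPoly (d : ℕ) : MvPolynomial (Fin 4) ℂ :=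
  X 0 ^ (d - 1) * X 1 + X 0 * X 1 ^ (d - 1) + X 2 ^ (d - 1) * X 3 + X 2 * X 3 ^ (d - 1)

/-- The line `z = ax`, `t = by`. -/
noncomputable def graphLine (a b : ℂ) : Submodule ℂ (Fin 4 → ℂ) :=
  Submodule.span ℂ {![1, 0, a, 0], ![0, 1, 0, b]}

/-- The line joining the points `(p₀ : p₁ : 0 : 0)` and `(0 : 0 : q₀ : q₁)`. -/
noncomputable def joinLine (p q : Fin 2 → ℂ) : Submodule ℂ (Fin 4 → ℂ) :=
  Submodule.span ℂ {![p 0, p 1, 0, 0], ![0, 0, q 0, q 1]}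

lemma mem_graphLine {a b : ℂ} {v : Fin 4 → ℂ} :
    v ∈ graphLine a b ↔ ∃ s r : ℂ, v = ![s, r, s * a, r * b] := by
  simp [graphLine, Submodule.mem_span_pair, eq_comm]

lemma mem_joinLine {p q : Fin 2 → ℂ} {v : Fin 4 → ℂ} :
    v ∈ joinLine p q ↔ ∃ s r : ℂ, v = ![s * p 0, s * p 1, r * q 0, r * q 1] := by
  simp [joinLine, Submodule.mem_span_pair, eq_comm]

lemma isLine_span_pair {u v : Fin 4 → ℂ} (h : LinearIndependent ℂ ![u, v]) :
    IsLine (Submodule.span ℂ {u, v}) := by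
  have := finrank_span_eq_card h
  rw [Matrix.range_cons_cons_empty] at this
  simpa [IsLine] using this

lemma isLine_graphLine (a b : ℂ) : IsLine (graphLine a b) := by
  refine isLine_span_pair (LinearIndependent.pair_iff.2 fun s r h => ?_)
  have h0 := congrFun h 0
  have h1 := congrFun h 1
  simp_all

lemma isLine_joinLine {p q : Fin 2 → ℂ} (hp : p ≠ 0) (hq : q ≠ 0) : IsLine (joinLine p q) := by
  refine isLine_span_pair (LinearIndependent.pair_iff.2 fun s r h => ?_)
  have h0 := congrFun h 0
  have h1 := congrFun h 1
  have h2 := congrFun h 2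
  have h3 := congrFun h 3
  simp at h0 h1 h2 h3
  constructor
  · by_contra hs
    exact hp (by ext i; fin_cases i <;> simp_all)
  · by_contra hr
    exact hq (by ext i; fin_cases i <;> simp_all)

lemma graphLine_inf_graphLine {a b a' b' : ℂ} (ha : a ≠ a') (hb : b ≠ b') :
    graphLine a b ⊓ graphLine a' b' = ⊥ := by
  refine (Submodule.eq_bot_iff _).2 fun v hv => ?_
  obtain ⟨s, r, rfl⟩ := mem_graphLine.1 hv.1
  obtain ⟨s', r', h⟩ := mem_graphLine.1 hv.2
  simp only [Matrix.vecCons_inj, and_true] at h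
  obtain ⟨rfl, rfl, h2, h3⟩ := h
  have hs : s = 0 := by
    by_contra hs
    exact ha (mul_left_cancel₀ hs h2)
  have hr : r = 0 := by
    by_contra hr
    exact hb (mul_left_cancel₀ hr h3)
  ext i; fin_cases i <;> simp [hs, hr]

lemma joinLine_inf_joinLine {p q p' q' : Fin 2 → ℂ} (hp : p 0 * p' 1 ≠ p 1 * p' 0)
    (hq : q 0 * q' 1 ≠ q 1 * q' 0) : joinLine p q ⊓ joinLine p' q' = ⊥ := by
  refine (Submodule.eq_bot_iff _).2 fun v hv => ?_
  obtain ⟨s, r, rfl⟩ := mem_joinLine.1 hv.1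
  obtain ⟨s', r', h⟩ := mem_joinLine.1 hv.2
  simp only [Matrix.vecCons_inj, and_true] at h
  obtain ⟨h0, h1, h2, h3⟩ := h
  have hs : s = 0 := by
    by_contra hs
    exact hp (mul_left_cancel₀ hs (by linear_combination p' 1 * h0 - p' 0 * h1))
  have hr : r = 0 := by
    by_contra hr
    exact hq (mul_left_cancel₀ hr (by linear_combination q' 1 * h2 - q' 0 * h3))
  ext i; fin_cases i <;> simp [hs, hr]

lemma graphLine_inf_joinLine {a b : ℂ} {p q : Fin 2 → ℂ} (hq : q ≠ 0)
    (h : a * (p 0 * q 1) ≠ b * (p 1 * q 0)) : graphLine a b ⊓ joinLine p q = ⊥ := by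
  refine (Submodule.eq_bot_iff _).2 fun v hv => ?_
  obtain ⟨s, r, hv1⟩ := mem_graphLine.1 hv.1
  obtain ⟨s', r', rfl⟩ := mem_joinLine.1 hv.2
  simp only [Matrix.vecCons_inj, and_true] at hv1
  obtain ⟨rfl, rfl, h2, h3⟩ := hv1
  have hs : s' = 0 := by
    by_contra hs
    exact h (mul_left_cancel₀ hs (by linear_combination q 0 * h3 - q 1 * h2))
  have hr : r' = 0 := by
    by_contra hr
    exact hq (by ext i; fin_cases i <;> simp_all)
  ext i; fin_cases i <;> simp [hs, hr]

lemma eval_ramsPoly (d : ℕ) (v : Fin 4 → ℂ) :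
    eval v (ramsPoly d) =
      v 0 ^ (d - 1) * v 1 + v 0 * v 1 ^ (d - 1) + v 2 ^ (d - 1) * v 3 + v 2 * v 3 ^ (d - 1) := by
  simp [ramsPoly]

lemma liesOn_graphLine {d : ℕ} {a b : ℂ} (h1 : a ^ (d - 1) * b = -1) (h2 : a * b ^ (d - 1) = -1) :
    LiesOn (ramsPoly d) (graphLine a b) := by
  intro v hv
  obtain ⟨s, r, rfl⟩ := mem_graphLine.1 hv
  simp only [eval_ramsPoly, Matrix.cons_val, mul_pow]
  linear_combination s ^ (d - 1) * r * h1 + s * r ^ (d - 1) * h2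

lemma liesOn_joinLine {d : ℕ} {p q : Fin 2 → ℂ}
    (hp : p 0 ^ (d - 1) * p 1 + p 0 * p 1 ^ (d - 1) = 0)
    (hq : q 0 ^ (d - 1) * q 1 + q 0 * q 1 ^ (d - 1) = 0) :
    LiesOn (ramsPoly d) (joinLine p q) := by
  intro v hv
  obtain ⟨s, r, rfl⟩ := mem_joinLine.1 hv
  simp only [eval_ramsPoly, Matrix.cons_val, mul_pow]
  linear_combination s ^ (d - 1) * s * hp + r ^ (d - 1) * r * hq

/-- The binary form `x^{n+2}y + xy^{n+2}` has no critical point besides the origin. -/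
lemma grad_eq_zero {n : ℕ} {x y : ℂ}
    (hx : ((n : ℂ) + 2) * x ^ (n + 1) * y + y ^ (n + 2) = 0)
    (hy : x ^ (n + 2) + x * (((n : ℂ) + 2) * y ^ (n + 1)) = 0) : x = 0 ∧ y = 0 := by
  by_cases hx0 : x = 0
  · subst hx0
    simpa using hx
  by_cases hy0 : y = 0
  · subst hy0
    simpa using hy
  exfalso
  have h1 : ((n : ℂ) + 2) * x ^ (n + 1) + y ^ (n + 1) = 0 :=
    mul_left_cancel₀ hy0 (by linear_combination hx)
  have h2 : x ^ (n + 1) + ((n : ℂ) + 2) * y ^ (n + 1) = 0 :=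
    mul_left_cancel₀ hx0 (by linear_combination hy)
  have h3 : ((n : ℂ) + 1) * ((n : ℂ) + 3) * y ^ (n + 1) = 0 := by
    linear_combination ((n : ℂ) + 2) * h2 - h1
  have h4 : (n : ℂ) + 1 ≠ 0 := by exact_mod_cast Nat.succ_ne_zero n
  have h5 : (n : ℂ) + 3 ≠ 0 := by exact_mod_cast Nat.succ_ne_zero (n + 2)
  exact mul_ne_zero (mul_ne_zero h4 h5) (pow_ne_zero _ hy0) h3

lemma smooth_ramsPoly (n : ℕ) : SmoothSurface (ramsPoly (n + 3)) := by
  intro v hv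
  by_contra! h
  have h0 := h 0
  have h1 := h 1
  have h2 := h 2
  have h3 := h 3
  simp [ramsPoly, pderiv_X] at h0 h1 h2 h3
  obtain ⟨e0, e1⟩ := grad_eq_zero (n := n) (x := v 0) (y := v 1)
    (by linear_combination h0) (by linear_combination h1)
  obtain ⟨e2, e3⟩ := grad_eq_zero (n := n) (x := v 2) (y := v 3)
    (by linear_combination h2) (by linear_combination h3)
  exact hv (by ext i; fin_cases i <;> simp [*])

/-- The points `p` of the four joins `joinLine p q`. -/
def leftPt (w : ℂ) : Fin 4 → Fin 2 → ℂ := ![![1, -1], ![1, -w], ![1, 0], ![0, 1]]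

/-- The points `q` of the four joins `joinLine p q`. -/
def rightPt (w : ℂ) : Fin 4 → Fin 2 → ℂ := ![![1, 0], ![0, 1], ![1, -1], ![1, -w]]

/-- The whole family of lines: graphs with slopes `-ζ^i`, `-ζ^{-mi}` (with `m = d - 1`), and the
four joins. -/
noncomputable def skewFamily (N m : ℕ) (ζ w : ℂ) : Fin N ⊕ Fin 4 → Submodule ℂ (Fin 4 → ℂ)
  | .inl i => graphLine (-ζ ^ (i : ℕ)) (-((ζ ^ (i : ℕ)) ^ m)⁻¹)
  | .inr k => joinLine (leftPt w k) (rightPt w k)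

lemma isLine_skewFamily (N m : ℕ) (ζ w : ℂ) (i : Fin N ⊕ Fin 4) :
    IsLine (skewFamily N m ζ w i) := by
  rcases i with i | k
  · exact isLine_graphLine _ _
  · refine isLine_joinLine (fun h => ?_) (fun h => ?_) <;>
    · have h0 := congrFun h 0
      have h1 := congrFun h 1
      fin_cases k <;> simp [leftPt, rightPt] at h0 h1

lemma liesOn_skewFamily {n : ℕ} (hn : Odd n) {ζ w : ℂ} (hζ : ζ ^ ((n + 2) * n) = 1)
    (hw : w ^ n = 1) (i : Fin ((n + 2) * n) ⊕ Fin 4) :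
    LiesOn (ramsPoly (n + 2)) (skewFamily ((n + 2) * n) (n + 1) ζ w i) := by
  have he : Even (n + 1) := hn.add_one
  rcases i with i | k
  · have hζ0 : ζ ≠ 0 := by
      rintro rfl
      rw [zero_pow (Nat.mul_ne_zero (by omega) hn.pos.ne')] at hζ
      exact zero_ne_one hζ
    have ha0 : ζ ^ (i : ℕ) ≠ 0 := pow_ne_zero _ hζ0
    have ha : (ζ ^ (i : ℕ)) ^ ((n + 2) * n) = 1 := by rw [pow_right_comm, hζ, one_pow]
    simp only [skewFamily]
    generalize ζ ^ (i : ℕ) = a at ha0 ha ⊢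
    refine liesOn_graphLine ?_ ?_
    · rw [Nat.add_sub_assoc (by norm_num), he.neg_pow]
      field_simp
    · rw [Nat.add_sub_assoc (by norm_num), he.neg_pow, inv_pow, ← pow_mul,
        show (n + 1) * (n + 1) = (n + 2) * n + 1 by ring, pow_succ, ha]
      field_simp
  · have hw' : w ^ (n + 1) = w := by rw [pow_succ, hw, one_mul]
    have hn0 : n ≠ 0 := hn.pos.ne'
    refine liesOn_joinLine ?_ ?_ <;> rw [Nat.add_sub_assoc (by norm_num)] <;>
      fin_cases k <;> simp [leftPt, rightPt, he.neg_pow, hw']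

lemma disjoint_skewFamily {n : ℕ} (hn : n ≠ 0) {ζ w : ℂ} (hζ : IsPrimitiveRoot ζ ((n + 2) * n))
    (hw : w ≠ 0) (hw1 : w ≠ 1) {i j : Fin ((n + 2) * n) ⊕ Fin 4} (hij : i ≠ j) :
    skewFamily ((n + 2) * n) (n + 1) ζ w i ⊓ skewFamily ((n + 2) * n) (n + 1) ζ w j = ⊥ := by
  have hζ0 : ζ ≠ 0 := hζ.ne_zero (Nat.mul_ne_zero (by omega) hn)
  have mixed (i : Fin ((n + 2) * n)) (k : Fin 4) :
      skewFamily ((n + 2) * n) (n + 1) ζ w (.inl i) ⊓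
        skewFamily ((n + 2) * n) (n + 1) ζ w (.inr k) = ⊥ := by
    refine graphLine_inf_joinLine (fun h => ?_) ?_
    · have h0 := congrFun h 0
      have h1 := congrFun h 1
      fin_cases k <;> simp [rightPt] at h0 h1
    · fin_cases k <;> simp [leftPt, rightPt, hζ0, eq_comm (a := (0 : ℂ))]
  rcases i with i | k <;> rcases j with j | l
  · have hne : ζ ^ (i : ℕ) ≠ ζ ^ (j : ℕ) := fun h =>
      hij (congrArg _ (Fin.ext (hζ.pow_inj i.2 j.2 h)))
    refine graphLine_inf_graphLine (fun h => hne (neg_injective h)) (fun h => hne ?_)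
    have h' : (ζ ^ (i : ℕ)) ^ (n + 1) = (ζ ^ (j : ℕ)) ^ (n + 1) := inv_injective (neg_injective h)
    -- `n + 1` is its own inverse modulo `(n + 2) * n`.
    have key (k : ℕ) : ((ζ ^ k) ^ (n + 1)) ^ (n + 1) = ζ ^ k := by
      rw [← pow_mul, show (n + 1) * (n + 1) = (n + 2) * n + 1 by ring, pow_succ, pow_right_comm,
        hζ.pow_eq_one, one_pow, one_mul]
    rw [← key i, ← key j, h']
  · exact mixed i l
  · rw [inf_comm]
    exact mixed j k
  · have hkl : k ≠ l := fun h => hij (congrArg _ h)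
    have hw1' : (1 : ℂ) ≠ w := hw1.symm
    refine joinLine_inf_joinLine ?_ ?_ <;> fin_cases k <;> fin_cases l <;>
      simp [leftPt, rightPt, hw, hw1, hw1'] at hkl ⊢

/-- For `d ≥ 5` with `gcd(d, d-2) = 1` (i.e. `d` odd), the surface
`R_d : x^{d-1}y + xy^{d-1} + z^{d-1}t + zt^{d-1} = 0` is smooth and contains a family of
`d(d-2) + 4` pairwise disjoint (skew) lines. -/
theorem rams_skew_lines (d : ℕ) (hd : 5 ≤ d) (hgcd : Nat.gcd d (d - 2) = 1) :
    SmoothSurface (ramsPoly d) ∧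
    ∃ W : Fin (d * (d - 2) + 4) → Submodule ℂ (Fin 4 → ℂ),
      Function.Injective W ∧
      (∀ i, IsLine (W i) ∧ LiesOn (ramsPoly d) (W i)) ∧
      (∀ i j, i ≠ j → W i ⊓ W j = ⊥) := by
  obtain ⟨n, rfl⟩ : ∃ n, d = n + 2 := ⟨d - 2, by omega⟩
  rw [Nat.add_sub_cancel] at hgcd ⊢
  have hn : Odd n := by
    by_contra h
    have h2 : 2 ∣ n := (Nat.not_odd_iff_even.1 h).two_dvd
    have := Nat.dvd_gcd (h2.add (dvd_refl 2)) h2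
    omega
  have hn0 : n ≠ 0 := by omega
  have hζ := Complex.isPrimitiveRoot_exp ((n + 2) * n) (Nat.mul_ne_zero (by omega) hn0)
  have hw := Complex.isPrimitiveRoot_exp n hn0
  set ζ := Complex.exp (2 * Real.pi * Complex.I / ((n + 2) * n : ℕ))
  set w := Complex.exp (2 * Real.pi * Complex.I / n)
  have hline := isLine_skewFamily ((n + 2) * n) (n + 1) ζ w
  have hdisj (i j : Fin ((n + 2) * n + 4)) (hij : i ≠ j) :=
    disjoint_skewFamily hn0 hζ (hw.ne_zero hn0) (hw.ne_one (by omega))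
      (finSumFinEquiv.symm.injective.ne hij)
  refine ⟨?_, fun i => skewFamily ((n + 2) * n) (n + 1) ζ w (finSumFinEquiv.symm i), ?_,
    fun i => ⟨hline _, liesOn_skewFamily hn hζ.pow_eq_one hw.pow_eq_one _⟩, hdisj⟩
  · obtain ⟨k, rfl⟩ := Nat.exists_eq_succ_of_ne_zero hn0
    exact smooth_ramsPoly k
  · intro i j h
    by_contra hij
    -- A line equal to one disjoint from it would be the zero subspace.
    have hbot := hdisj i j hij
    simp only at h
    rw [← h, inf_idem] at hbot
    have h2 := hline (finSumFinEquiv.symm i)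
    rw [hbot, IsLine, finrank_bot] at h2
    omega
end
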